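/- arXiv:math/9605202 — 4 statements merged into one kernel-verified Lean document; each statement's English description precedes it below -/
import Mathlib

section
/- Let F be a nontrivial finite perfect group and let G_n = F for all n ∈ ℕ. Then c(∏_{n∈ℕ} G_n) = ω₁; that is, the full direct product ∏_n G_n cannot be written as the union of a countable increasing chain of proper subgroups, but it can be written as the union of an increasing chain (H_α)_{α<ω₁} of proper subgroups indexed by the countable ordinals. -/
open Classical in
theorem glue_aux {F : Type*} [Group F] [Finite F] (H : Subgroup (ℕ → F)) (g x : ℕ → F)
    (h : ∀ a : F, (fun n => if g n = a then x n else 1) ∈ H) : x ∈ H := by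
  have : Fintype F := Fintype.ofFinite F
  have key : ∀ T : Finset F, (fun n => if g n ∈ T then x n else 1) ∈ H := by
    intro T
    induction T using Finset.induction_on with
    | empty =>
      simp only [Finset.notMem_empty, if_false]
      exact H.one_mem
    | insert a T ha ih =>
      have := H.mul_mem (h a) ih
      convert this using 1
      funext n
      simp only [Finset.mem_insert, Pi.mul_apply]
      by_cases h1 : g n = a
      · have : g n ∉ T := by rw [h1]; exact ha
        simp [h1, ha]
      · simp [h1]
  simpa using key Finset.univ

/-- `A` is good for `H` if all functions supported on `A` belong to `H`. -/
def SuppIn {F : Type*} [Group F] (H : Subgroup (ℕ → F)) (A : Set ℕ) : Prop :=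
  ∀ g : ℕ → F, (∀ n, n ∉ A → g n = 1) → g ∈ H

theorem SuppIn.mono {F : Type*} [Group F] {H K : Subgroup (ℕ → F)} {A B : Set ℕ}
    (h : SuppIn H A) (hHK : H ≤ K) (hBA : B ⊆ A) : SuppIn K B :=
  fun g hg => hHK (h g fun n hn => hg n fun hb => hn (hBA hb))

theorem exists_uniform {F : Type*} [Group F] [Finite F]
    {P : F → ℕ → Prop} (hP : ∀ a m k, m ≤ k → P a m → P a k) (h : ∀ a, ∃ m, P a m) (n : ℕ) :
    ∃ m, n ≤ m ∧ ∀ a, P a m := by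
  choose u hu using h
  obtain ⟨M, hM⟩ := (Set.finite_range u).bddAbove
  exact ⟨max n M, le_max_left _ _, fun a => hP a _ _ ((hM ⟨a, rfl⟩).trans (le_max_right _ _)) (hu a)⟩

open Classical in
theorem disjoint_good {F : Type*} [Group F] [Finite F] (hF : commutator F = ⊤)
    (H : ℕ → Subgroup (ℕ → F)) (hm : Monotone H) (hU : ∀ g : ℕ → F, ∃ n, g ∈ H n)
    (A : ℕ → Set ℕ) (hA : ∀ i j n, n ∈ A i → n ∈ A j → i = j) :
    ∃ n m, SuppIn (H m) (A n) := by
  have h1 : ∃ n, ∀ g : ℕ → F, ∃ h ∈ H n, ∀ k ∈ A n, h k = g k := by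
    by_contra! hc
    choose g hg using hc
    obtain ⟨m, hm'⟩ := hU fun k => if hk : ∃ n, k ∈ A n then g hk.choose k else 1
    obtain ⟨k, hk, hne⟩ := hg m _ hm'
    apply hne
    have hex : ∃ n, k ∈ A n := ⟨m, hk⟩
    rw [dif_pos hex, hA _ _ _ hex.choose_spec hk]
  obtain ⟨n, hn⟩ := h1
  obtain ⟨m, hnm, hc⟩ := exists_uniform (F := F)
    (P := fun a m => (fun k => if k ∈ A n then a else 1) ∈ H m)
    (fun a m k hmk h => hm hmk h) (fun a => hU _) n
  refine ⟨n, m, ?_⟩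
  have conj : ∀ x ∈ H m, (∀ k, k ∉ A n → x k = 1) → ∀ y : ℕ → F, y * x * y⁻¹ ∈ H m := by
    intro x hx hxs y
    obtain ⟨h, hh, hy⟩ := hn y
    have hh := hm hnm hh
    have : y * x * y⁻¹ = h * x * h⁻¹ := by
      funext k
      by_cases hk : k ∈ A n
      · simp [hy k hk]
      · simp [hxs k hk]
    rw [this]
    exact (H m).mul_mem ((H m).mul_mem hh hx) ((H m).inv_mem hh)
  let K : Subgroup F :=
    { carrier := {a | ∀ C ⊆ A n, (fun k => if k ∈ C then a else 1) ∈ H m}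
      one_mem' := by
        intro C _
        simp only [ite_self]
        exact (H m).one_mem
      mul_mem' := by
        intro a b ha hb C hC
        convert (H m).mul_mem (ha C hC) (hb C hC) using 1
        funext k
        by_cases hk : k ∈ C <;> simp [hk]
      inv_mem' := by
        intro a ha C hC
        convert (H m).inv_mem (ha C hC) using 1
        funext k
        by_cases hk : k ∈ C <;> simp [hk] }
  have hK : K = ⊤ := by
    rw [eq_top_iff, ← hF, commutator_def, Subgroup.commutator_le]
    intro a _ b _ C hC
    have h1 := hc a
    have h2 := conj _ ((H m).inv_mem h1) (by intro k hk; simp [hk])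
      (fun k => if k ∈ C then b else 1)
    convert (H m).mul_mem h1 h2 using 1
    funext k
    by_cases hk : k ∈ C
    · have := hC hk
      simp [hk, this, commutatorElement_def, mul_assoc]
    · simp [hk]
  intro g hg
  apply glue_aux _ g
  intro a
  by_cases ha : a = 1
  · convert (H m).one_mem using 1
    funext k
    simp only [Pi.one_apply]
    split_ifs with h
    · rw [h, ha]
    · rfl
  have : a ∈ K := by rw [hK]; trivial
  convert this {k | g k = a} (by
    intro k hk
    by_contra h
    exact ha (hk.symm.trans (hg k h))) using 1
  funext k
  by_cases h : g k = a <;> simp [h]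

theorem disjoint_good' {F : Type*} [Group F] [Finite F] (hF : commutator F = ⊤)
    (H : ℕ → Subgroup (ℕ → F)) (hm : Monotone H) (hU : ∀ g : ℕ → F, ∃ n, g ∈ H n)
    (A : ℕ → Set ℕ) (hA : ∀ i j n, n ∈ A i → n ∈ A j → i = j) :
    ∃ n, SuppIn (H n) (A n) := by
  obtain ⟨n, m, h⟩ := disjoint_good hF H hm hU (fun j => ⋃ l, A (Nat.pair j l)) (by
    intro i j n hi hj
    simp only [Set.mem_iUnion] at hi hj
    obtain ⟨l, hl⟩ := hi
    obtain ⟨l', hl'⟩ := hj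
    have := hA _ _ _ hl hl'
    exact (Nat.pair_eq_pair.1 this).1)
  exact ⟨Nat.pair n m, h.mono (hm (Nat.right_le_pair n m)) (Set.subset_iUnion_of_subset m le_rfl)⟩

open Classical in
theorem part_one {F : Type*} [Group F] [Finite F] (hF : commutator F = ⊤)
    (H : ℕ → Subgroup (ℕ → F)) (hm : Monotone H) (hU : ∀ g : ℕ → F, ∃ n, g ∈ H n)
    (hp : ∀ n, H n ≠ ⊤) : False := by
  have key : ∃ B, (∀ m, ¬ SuppIn (H m) B) ∧ ∃ m, ∀ A ⊆ B,
      SuppIn (H m) A ∨ ∃ k, SuppIn (H k) (B \ A) := by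
    by_contra! hc
    have hc' : ∀ (B : {B : Set ℕ // ∀ m, ¬ SuppIn (H m) B}) (m : ℕ), ∃ A ⊆ B.1,
      ¬ SuppIn (H m) A ∧ ∀ k, ¬ SuppIn (H k) (B.1 \ A) := fun B m => hc B.1 B.2 m
    choose f hf1 hf2 hf3 using hc'
    have h0 : ∀ m, ¬ SuppIn (H m) Set.univ := fun m h =>
      hp m (eq_top_iff.2 fun g _ => h g (by simp))
    let B : ℕ → {B : Set ℕ // ∀ m, ¬ SuppIn (H m) B} := fun n =>
      Nat.rec ⟨Set.univ, h0⟩ (fun k B => ⟨B.1 \ f B k, hf3 B k⟩) n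
    have hB : ∀ n, (B (n+1)).1 = (B n).1 \ f (B n) n := fun n => rfl
    have hanti : Antitone fun n => (B n).1 :=
      antitone_nat_of_succ_le fun n => by rw [hB]; exact Set.sdiff_subset
    have hlt : ∀ i j, i < j → ∀ n, n ∈ f (B i) i → n ∈ f (B j) j → False := by
      intro i j hij n hi hj
      have : n ∈ (B (i+1)).1 := hanti (Nat.succ_le_of_lt hij) (hf1 _ _ hj)
      rw [hB] at this
      exact this.2 hi
    obtain ⟨n, hn⟩ := disjoint_good' hF H hm hU (fun n => f (B n) n) (by
      intro i j n hi hj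
      rcases lt_trichotomy i j with h | h | h
      · exact (hlt i j h n hi hj).elim
      · exact h
      · exact (hlt j i h n hj hi).elim)
    exact hf2 _ _ hn
  obtain ⟨B, hB, m, hAB⟩ := key
  obtain ⟨M, hmM, hM⟩ := exists_uniform (F := F)
    (P := fun a m => (fun k => if k ∈ B then a else 1) ∈ H m)
    (fun a m k hmk h => hm hmk h) (fun a => hU _) m
  apply hB M
  intro g hg
  by_cases hall : ∀ a : F, ∃ k, SuppIn (H k) (B ∩ {n | g n = a})
  · obtain ⟨K, -, hK⟩ := exists_uniform (F := F)
      (P := fun a k => SuppIn (H k) (B ∩ {n | g n = a}))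
      (fun a m k hmk h => h.mono (hm hmk) le_rfl) hall 0
    refine (hB K ?_).elim
    intro x hx
    apply glue_aux _ g
    intro a
    apply hK a
    intro n hn
    by_cases h : g n = a
    · simp only [h, if_true]
      exact hx n fun hb => hn ⟨hb, h⟩
    · simp [h]
  · push Not at hall
    obtain ⟨a, ha⟩ := hall
    rcases hAB (B \ {n | g n = a}) Set.sdiff_subset with h | ⟨k, hk⟩
    · have h2 := h (fun n => if n ∈ B then a⁻¹ * g n else 1) (by
        intro n hn
        by_cases hb : n ∈ B
        · have : g n = a := by
            by_contra h'
            exact hn ⟨hb, h'⟩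
          simp [this]
        · simp [hb])
      convert (H M).mul_mem (hM a) (hm hmM h2) using 1
      funext n
      by_cases hb : n ∈ B
      · simp [hb]
      · simp [hb, hg n hb]
    · refine (ha k ?_).elim
      rwa [Set.sdiff_sdiff_right_self] at hk


/-- The elementary product determined by finite sets `e.1` (domain) and `e.2` (true values). -/
def elemProd {ι : Type*} (X : ι → Set ℕ) (e : Finset ι × Finset ι) : Set ℕ :=
  {n | ∀ i ∈ e.1, n ∈ X i ↔ i ∈ e.2}

theorem exists_independent {ι : Type*} (f : ι → ℝ) (hf : Function.Injective f) :
    ∃ X : ι → Set ℕ, ∀ e, (elemProd X e).Nonempty := by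
  classical
  refine ⟨fun i => {n | ∃ S : Finset (ℚ × ℚ), Encodable.decode n = some S ∧
    ∃ p ∈ S, (p.1 : ℝ) < f i ∧ f i < p.2}, ?_⟩
  rintro ⟨s, T⟩
  have h1 : ∀ i : ι, ∃ p : ℚ × ℚ, ((p.1 : ℝ) < f i ∧ f i < p.2) ∧
      ∀ j ∈ s, ((p.1 : ℝ) < f j ∧ f j < p.2) → j = i := by
    intro i
    have ho : IsOpen ((f '' (s.erase i : Finset ι) : Set ℝ)ᶜ) :=
      (((s.erase i).finite_toSet.image f).isClosed).isOpen_compl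
    obtain ⟨v, hv, hiv, hsub⟩ := Real.isTopologicalBasis_Ioo_rat.exists_subset_of_mem_open
      (a := f i) (by
        rintro ⟨j, hj, hji⟩
        have := hf hji
        subst this
        simp at hj) ho
    simp only [Set.mem_iUnion, Set.mem_singleton_iff] at hv
    obtain ⟨a, b, hab, rfl⟩ := hv
    refine ⟨(a, b), hiv, ?_⟩
    intro j hj hjab
    by_contra hne
    exact hsub hjab ⟨j, by simp [hne, hj], rfl⟩
  choose p hp hp2 using h1
  refine ⟨Encodable.encode ((s ∩ T).image p), ?_⟩
  intro i hi
  simp only [Set.mem_ofPred_eq, Encodable.encodek, Option.some.injEq]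
  constructor
  · rintro ⟨S, rfl, q, hq, hq2⟩
    obtain ⟨j, hj, rfl⟩ := Finset.mem_image.1 hq
    rw [hp2 j i hi hq2]
    exact (Finset.mem_inter.1 hj).2
  · intro hiT
    exact ⟨_, rfl, p i, Finset.mem_image_of_mem _ (Finset.mem_inter.2 ⟨hi, hiT⟩), hp i⟩

/-- A minimal filter for which all elementary products are positive. -/
theorem exists_filter {ι : Type*} (X : ι → Set ℕ) (hX : ∀ e, (elemProd X e).Nonempty) :
    ∃ L : Filter ℕ, (∀ e, ∃ᶠ n in L, n ∈ elemProd X e) ∧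
      ∀ b : Set ℕ, (∃ᶠ n in L, n ∈ b) → ∃ e, ∀ᶠ n in L, n ∈ elemProd X e → n ∈ b := by
  obtain ⟨L, -, hL⟩ := @zorn_le_nonempty₀ (Filter ℕ)ᵒᵈ _
    {L | ∀ e, ∃ᶠ n in (OrderDual.ofDual L), n ∈ elemProd X e} (by
      intro c hc hch y hy
      refine ⟨OrderDual.toDual (⨅ L ∈ c, OrderDual.ofDual L), ?_, ?_⟩
      · intro e he
        have he : {n | ¬ n ∈ elemProd X e} ∈ (⨅ L ∈ c, OrderDual.ofDual L) := he
        rw [Filter.mem_biInf_of_directed (f := fun L => OrderDual.ofDual L) (s := c) ?_ ⟨y, hy⟩] at he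
        · obtain ⟨L, hL, h⟩ := he
          exact hc hL e h
        · exact hch.directedOn
      · intro z hz
        exact iInf₂_le (f := fun (L : (Filter ℕ)ᵒᵈ) (_ : L ∈ c) => OrderDual.ofDual L) z hz)
    (OrderDual.toDual ⊤) (by
      intro e
      simp only [OrderDual.ofDual_toDual, Filter.frequently_top]
      exact hX e)
  refine ⟨OrderDual.ofDual L, hL.prop, ?_⟩
  intro b hb
  by_contra! hc
  have := hL.le_of_ge (y := OrderDual.toDual (OrderDual.ofDual L ⊓ Filter.principal bᶜ)) (by
    intro e he
    refine hc e ?_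
    have he : ∀ᶠ n in (OrderDual.ofDual L ⊓ Filter.principal bᶜ), ¬ n ∈ elemProd X e := he
    rw [Filter.eventually_inf_principal] at he
    filter_upwards [he] with n hn hne
    exact hn hne.2 hne.1) (inf_le_left (a := OrderDual.ofDual L))
  have h2 : OrderDual.ofDual L ≤ OrderDual.ofDual L ⊓ Filter.principal bᶜ := this
  exact hb (Filter.le_principal_iff.1 (h2.trans inf_le_right))

/-- both components of `e` lie in `A`. -/
def CondIn {ι : Type*} (A : Set ι) (e : Finset ι × Finset ι) : Prop :=
  (e.1 : Set ι) ⊆ A ∧ (e.2 : Set ι) ⊆ A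

/-- functions decided densely by conditions in `A` -/
def decSub {ι : Type*} (X : ι → Set ℕ) (L : Filter ℕ) (F : Type*) [Group F] (A : Set ι) :
    Subgroup (ℕ → F) where
  carrier := {g | ∀ e, CondIn A e → ∃ e', CondIn A e' ∧
    (∀ᶠ n in L, n ∈ elemProd X e' → n ∈ elemProd X e) ∧
    ∃ a, ∀ᶠ n in L, n ∈ elemProd X e' → g n = a}
  one_mem' := fun e he => ⟨e, he, by simp, 1, by simp⟩
  mul_mem' := by
    intro g h hg hh e he
    obtain ⟨e1, he1, h1, a, ha⟩ := hg e he
    obtain ⟨e2, he2, h2, b, hb⟩ := hh e1 he1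
    refine ⟨e2, he2, ?_, a * b, ?_⟩
    · filter_upwards [h1, h2] with n h1 h2 h using h1 (h2 h)
    · filter_upwards [ha, hb, h2] with n ha hb h2 h
      rw [Pi.mul_apply, ha (h2 h), hb h]
  inv_mem' := by
    intro g hg e he
    obtain ⟨e1, he1, h1, a, ha⟩ := hg e he
    refine ⟨e1, he1, h1, a⁻¹, ?_⟩
    filter_upwards [ha] with n ha h
    rw [Pi.inv_apply, ha h]

theorem decSub_mono {ι : Type*} (X : ι → Set ℕ) (L : Filter ℕ) (F : Type*) [Group F]
    {A B : Set ι} (hAB : A ⊆ B) : decSub X L F A ≤ decSub X L F B := by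
  classical
  rintro g hg ⟨s, T⟩ ⟨hs, hT⟩
  obtain ⟨⟨s', T'⟩, ⟨hs', hT'⟩, h1, a, ha⟩ := hg (s.filter (· ∈ A), T.filter (· ∈ A))
    ⟨by intro i; simp, by intro i; simp⟩
  simp only at hs hT hs' hT'
  have hsub : ∀ n, n ∈ elemProd X (s' ∪ s, T' ∪ T.filter (· ∉ A)) → n ∈ elemProd X (s', T') := by
    intro n hn i hi
    have := hn i (by simp [hi])
    have hA : i ∈ A := hs' hi
    simpa [hA] using this
  refine ⟨(s' ∪ s, T' ∪ T.filter (· ∉ A)), ⟨?_, ?_⟩, ?_, a, ?_⟩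
  · intro i hi
    simp only [Finset.coe_union, Set.mem_union] at hi
    exact hi.elim (fun h => hAB (hs' h)) (fun h => hs h)
  · intro i hi
    simp only [Finset.coe_union, Set.mem_union] at hi
    exact hi.elim (fun h => hAB (hT' h)) (fun h => hT (Finset.mem_filter.1 h).1)
  · filter_upwards [h1] with n h1 h i hi
    by_cases hA : i ∈ A
    · simpa [hA] using h1 (hsub n h) i (by simp only [Finset.mem_filter]; exact ⟨hi, hA⟩)
    · have h3 := h i (by simp only [Finset.mem_union]; exact Or.inr hi)
      have h4 : i ∉ T' := fun h => hA (hT' h)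
      simpa [hA, h4] using h3
  · filter_upwards [ha] with n ha h using ha (hsub n h)

theorem decSub_ne_top {ι : Type*} (X : ι → Set ℕ) (L : Filter ℕ) (F : Type*) [Group F]
    [Nontrivial F] (hL : ∀ e, ∃ᶠ n in L, n ∈ elemProd X e)
    {A : Set ι} (i : ι) (hi : i ∉ A) : decSub X L F A ≠ ⊤ := by
  classical
  intro htop
  obtain ⟨f, hf⟩ := exists_ne (1 : F)
  have hg : (fun n => if n ∈ X i then f else 1) ∈ decSub X L F A := by rw [htop]; trivial
  obtain ⟨⟨s, T⟩, ⟨hs, hT⟩, -, a, ha⟩ := hg (∅, ∅) ⟨by simp, by simp⟩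
  simp only at hs hT
  have his : i ∉ s := fun h => hi (hs h)
  have hiT : i ∉ T := fun h => hi (hT h)
  obtain ⟨n, hn, hna⟩ := ((hL (insert i s, insert i T)).and_eventually ha).exists
  obtain ⟨m, hm, hma⟩ := ((hL (insert i s, T)).and_eventually ha).exists
  have e1 := hna (by
    intro j hj
    have hne : j ≠ i := fun h => his (h ▸ hj)
    simpa [hne] using hn j (Finset.mem_insert_of_mem hj))
  have e2 := hma (by
    intro j hj
    exact hm j (Finset.mem_insert_of_mem hj))
  have h1 : n ∈ X i := (hn i (Finset.mem_insert_self _ _)).2 (Finset.mem_insert_self _ _)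
  have h2 : m ∉ X i := fun h => hiT ((hm i (Finset.mem_insert_self _ _)).1 h)
  simp only [h1, if_true] at e1
  simp only [h2, if_false] at e2
  exact hf (e1.trans e2.symm)

theorem exists_closed {ι : Type*} (h : Finset ι × Finset ι → Finset ι × Finset ι) :
    ∃ A : Set ι, A.Countable ∧ ∀ e, CondIn A e → CondIn A (h e) := by
  let step : Set ι → Set ι := fun A =>
    A ∪ ⋃ e ∈ {e | CondIn A e}, ((h e).1 ∪ (h e).2 : Set ι)
  let A : ℕ → Set ι := fun n => step^[n] ∅
  have hA : ∀ n, A (n+1) = step (A n) := fun n => Function.iterate_succ_apply' _ _ _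
  have hmono : Monotone A := monotone_nat_of_le_succ fun n => by
    rw [hA]; exact Set.subset_union_left
  have hcount : ∀ n, (A n).Countable := by
    intro n
    induction n with
    | zero => exact Set.countable_empty
    | succ n ih =>
      rw [hA]
      refine ih.union (Set.Countable.biUnion ?_ fun e _ =>
        ((h e).1.countable_toSet.union (h e).2.countable_toSet))
      have h1 : {t : Finset ι | (t : Set ι) ⊆ A n}.Countable := by
        have := Set.countable_ofPred_finite_subset ih
        refine (this.preimage_of_injOn (f := fun t : Finset ι => (t : Set ι))
          (Finset.coe_injective.injOn)).mono ?_
        intro t ht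
        exact ⟨t.finite_toSet, ht⟩
      refine (h1.prod h1).mono ?_
      intro e he
      exact he
  refine ⟨⋃ n, A n, Set.countable_iUnion hcount, ?_⟩
  have hfin : ∀ t : Finset ι, (t : Set ι) ⊆ ⋃ n, A n → ∃ n, (t : Set ι) ⊆ A n := by
    intro t ht
    exact (hmono.directed_le).exists_mem_subset_of_finset_subset_biUnion ht
  rintro e ⟨h1, h2⟩
  obtain ⟨n1, h1⟩ := hfin _ h1
  obtain ⟨n2, h2⟩ := hfin _ h2
  have he : CondIn (A (max n1 n2)) e :=
    ⟨h1.trans (hmono (le_max_left _ _)), h2.trans (hmono (le_max_right _ _))⟩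
  have hsub : ((h e).1 ∪ (h e).2 : Set ι) ⊆ ⋃ n, A n := by
    refine Set.Subset.trans ?_ (Set.subset_iUnion A (max n1 n2 + 1))
    rw [hA]
    exact Set.subset_union_of_subset_right
      (Set.subset_biUnion_of_mem (u := fun e => ((h e).1 ∪ (h e).2 : Set ι)) he) _
  exact ⟨Set.subset_union_left.trans hsub, Set.subset_union_right.trans hsub⟩

theorem exists_decSub {ι : Type*} (X : ι → Set ℕ) (L : Filter ℕ) (F : Type*) [Group F]
    [Finite F] (hL : ∀ e, ∃ᶠ n in L, n ∈ elemProd X e)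
    (hL2 : ∀ b : Set ℕ, (∃ᶠ n in L, n ∈ b) → ∃ e, ∀ᶠ n in L, n ∈ elemProd X e → n ∈ b)
    (g : ℕ → F) : ∃ A : Set ι, A.Countable ∧ g ∈ decSub X L F A := by
  have key : ∀ e, ∃ e', (∀ᶠ n in L, n ∈ elemProd X e' → n ∈ elemProd X e) ∧
      ∃ a, ∀ᶠ n in L, n ∈ elemProd X e' → g n = a := by
    intro e
    have h1 : ∃ a, ∃ᶠ n in L, n ∈ elemProd X e ∩ {n | g n = a} := by
      by_contra! hc
      have h2 : ∀ᶠ n in L, ∀ a, ¬ n ∈ elemProd X e ∩ {n | g n = a} :=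
        Filter.eventually_all.2 fun a => by simpa using hc a
      obtain ⟨n, hn, hn2⟩ := ((hL e).and_eventually h2).exists
      exact hn2 (g n) ⟨hn, rfl⟩
    obtain ⟨a, ha⟩ := h1
    obtain ⟨e', he'⟩ := hL2 _ ha
    exact ⟨e', he'.mono fun n h h' => (h h').1, a, he'.mono fun n h h' => (h h').2⟩
  choose h hh using key
  obtain ⟨A, hA, hcl⟩ := exists_closed h
  exact ⟨A, hA, fun e he => ⟨h e, hcl e he, hh e⟩⟩

theorem part_two (F : Type*) [Group F] [Finite F] [Nontrivial F] :
    ∃ H : Set.Iio (Cardinal.aleph 1).ord → Subgroup (ℕ → F),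
        Monotone H ∧ (∀ i, H i ≠ ⊤) ∧ ∀ g : ℕ → F, ∃ i, g ∈ H i := by
  have hinj : ∃ f : Set.Iio (Cardinal.aleph 1).ord → ℝ, Function.Injective f := by
    have : Cardinal.lift.{0} (Cardinal.mk (Set.Iio (Cardinal.aleph 1).ord)) ≤
        Cardinal.lift (Cardinal.mk ℝ) := by
      rw [Cardinal.mk_Iio_ordinal, Cardinal.card_ord, Cardinal.mk_real]
      simpa using Cardinal.aleph_one_le_continuum
    obtain ⟨f⟩ := Cardinal.lift_mk_le'.1 this
    exact ⟨f, f.injective⟩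
  obtain ⟨f, hf⟩ := hinj
  obtain ⟨X, hX⟩ := exists_independent f hf
  obtain ⟨L, hL, hL2⟩ := exists_filter X hX
  refine ⟨fun i => decSub X L F (Set.Iio i), ?_, ?_, ?_⟩
  · intro i j hij
    exact decSub_mono X L F (Set.Iio_subset_Iio hij)
  · intro i
    exact decSub_ne_top X L F hL i (by simp)
  · intro g
    obtain ⟨A, hA, hg⟩ := exists_decSub X L F hL hL2 g
    have hb : ∃ i, A ⊆ Set.Iio i := by
      have : Countable A := hA
      have hlim := Cardinal.isSuccLimit_ord (Cardinal.aleph0_le_aleph 1)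
      have hs : ⨆ a : A, Order.succ (a.1.1) < (Cardinal.aleph 1).ord := by
        have ho := Cardinal.ord_aleph 1
        refine lt_of_lt_of_eq (Ordinal.iSup_lt_omega_one ?_) ho.symm
        intro a
        refine lt_of_lt_of_eq ?_ ho
        exact hlim.succ_lt a.1.2
      refine ⟨⟨_, hs⟩, ?_⟩
      intro a ha
      show a.1 < _
      refine (Order.lt_succ a.1).trans_le ?_
      exact Ordinal.le_iSup (fun a : A => Order.succ (a.1.1)) ⟨a, ha⟩
    obtain ⟨i, hi⟩ := hb
    exact ⟨i, decSub_mono X L F hi hg⟩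

/-- If `F` is a nontrivial finite perfect group then `c(∏ n : ℕ, F) = ω₁`:
the product has no countable increasing chain of proper subgroups with union everything,
but it has such a chain indexed by the ordinals below `ω₁`. -/
theorem stmt_1 (F : Type*) [Group F] [Finite F] [Nontrivial F]
    (hF : commutator F = ⊤) :
    (¬ ∃ H : ℕ → Subgroup (ℕ → F),
        Monotone H ∧ (∀ n, H n ≠ ⊤) ∧ ∀ g : ℕ → F, ∃ n, g ∈ H n) ∧
    (∃ H : Set.Iio (Cardinal.aleph 1).ord → Subgroup (ℕ → F),
        Monotone H ∧ (∀ i, H i ≠ ⊤) ∧ ∀ g : ℕ → F, ∃ i, g ∈ H i) := by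
  exact ⟨fun ⟨H, hm, hp, hU⟩ => part_one hF H hm hU hp, part_two F⟩
end

section
/- Fix an integer d ≥ 2 and let (q_n)_{n∈ℕ} be a strictly increasing sequence of prime powers. Then c(∏_{n∈ℕ} SL(d, GF(q_n))) = ω; that is, the full direct product ∏_n SL_d(GF(q_n)) of the special linear groups of degree d over the finite fields with q_n elements can be written as the union of a strictly increasing countable chain (H_t)_{t∈ℕ} of proper subgroups. -/
open Cardinal in
theorem field_chain (K : Type*) [Field K] [Uncountable K] :
    ∃ S : ℕ → Subring K, StrictMono S ∧ ∀ x, ∃ t, x ∈ S t := by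
  classical
  let k : Subfield K := ⊥
  have hk : #k ≤ ℵ₀ := by
    have := Subfield.cardinalMk_closure_le_max (∅ : Set K)
    rw [Subfield.closure_empty] at this
    simpa using this
  let M := AlgebraicIndependent.matroid k K
  obtain ⟨B, hB⟩ := M.exists_isBase
  have hspan := hB.closure_eq
  have hcl : ∀ s : Set K, M.closure s =
      Subalgebra.algebraicClosure (Algebra.adjoin k s) K := fun s =>
    AlgebraicIndependent.matroid_closure_eq
  have hinf : B.Infinite := by
    intro hfin
    have h1 : #(Algebra.adjoin k B) ≤ ℵ₀ := by
      refine (Algebra.cardinalMk_adjoin_le k B).trans ?_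
      simp [hk, hfin.countable.le_aleph0]
    have h2 : Countable (Algebra.adjoin k B) := Cardinal.mk_le_aleph0_iff.mp h1
    have h3 := Algebraic.countable (Algebra.adjoin k B) K
    have h4 : {x : K | IsAlgebraic (Algebra.adjoin k B) x} = Set.univ := by
      have := hcl B
      rw [hspan] at this
      exact this.symm
    rw [h4] at h3
    exact not_countable (Set.countable_univ_iff.mp h3)
  let b := hinf.natEmbedding
  let T : ℕ → Set K := fun t => B \ {x | ∃ s, t ≤ s ∧ (b s : K) = x}
  have hT : Monotone T := by
    rintro i j hij x ⟨hx, hx'⟩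
    exact ⟨hx, fun ⟨s, hs, h⟩ => hx' ⟨s, hij.trans hs, h⟩⟩
  let S : ℕ → Subring K := fun t =>
    (Subalgebra.algebraicClosure (Algebra.adjoin k (T t)) K).toSubring
  have hS : ∀ t x, x ∈ S t ↔ x ∈ M.closure (T t) := by
    intro t x
    rw [hcl]; rfl
  refine ⟨S, strictMono_nat_of_lt_succ fun t => ?_, fun x => ?_⟩
  · refine SetLike.lt_iff_le_and_exists.mpr ⟨fun x hx => ?_, (b t : K), ?_, ?_⟩
    · rw [hS] at *
      exact M.closure_subset_closure (hT t.le_succ) hx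
    · rw [hS]
      refine M.mem_closure_of_mem ⟨(b t).2, ?_⟩ (Set.subset_univ _)
      rintro ⟨s, hs, h⟩
      have := b.injective (Subtype.ext h)
      omega
    · rw [hS]
      intro h
      refine hB.indep.notMem_closure_sdiff_of_mem (b t).2 (M.closure_subset_closure ?_ h)
      rintro x ⟨hx, hx'⟩
      exact ⟨hx, fun h => hx' ⟨t, le_rfl, h.symm⟩⟩
  · have hx : x ∈ M.closure B := by rw [hspan]; trivial
    obtain ⟨I, hIB, hI, -, hxI⟩ := Matroid.exists_mem_finite_closure_of_mem_closure hx
    have hpre : {s | (b s : K) ∈ I}.Finite :=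
      hI.preimage (Set.injOn_of_injective (Subtype.val_injective.comp b.injective))
    obtain ⟨t, ht⟩ := hpre.bddAbove
    refine ⟨t + 1, ?_⟩
    rw [hS]
    refine M.closure_subset_closure ?_ hxI
    intro y hy
    refine ⟨hIB hy, ?_⟩
    rintro ⟨s, hs, rfl⟩
    have := ht hy
    omega

theorem prod_quotient (F : ℕ → Type*) [∀ n, Field (F n)] [∀ n, Fintype (F n)]
    (hq : StrictMono fun n => Fintype.card (F n)) :
    ∃ M : Ideal (∀ n, F n), M.IsMaximal ∧ Uncountable ((∀ n, F n) ⧸ M) := by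
  classical
  let J : Ideal (∀ n, F n) :=
    { carrier := {f | ∃ N, ∀ n, N ≤ n → f n = 0}
      zero_mem' := ⟨0, fun _ _ => rfl⟩
      add_mem' := by
        rintro f g ⟨N, hN⟩ ⟨N', hN'⟩
        refine ⟨max N N', fun n hn => ?_⟩
        simp [hN n (le_trans (le_max_left _ _) hn), hN' n (le_trans (le_max_right _ _) hn)]
      smul_mem' := by
        rintro c f ⟨N, hN⟩
        exact ⟨N, fun n hn => by simp [hN n hn]⟩ }
  have hJ : J ≠ ⊤ := by
    rw [Ideal.ne_top_iff_one]
    rintro ⟨N, hN⟩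
    exact one_ne_zero (hN N le_rfl)
  obtain ⟨M, hM, hJM⟩ := Ideal.exists_le_maximal J hJ
  refine ⟨M, hM, ?_⟩
  have hcard : ∀ n, n < Fintype.card (F n) := by
    intro n
    induction n with
    | zero => exact Fintype.card_pos
    | succ n ih =>
      have := hq (show n < n + 1 by omega)
      simp only at this
      omega
  rw [← not_countable_iff]
  intro hc
  obtain ⟨e, he⟩ := exists_surjective_nat ((∀ n, F n) ⧸ M)
  choose f hf using fun i => Ideal.Quotient.mk_surjective (e i)
  have hex : ∀ n, ∃ y : F n, ∀ i < n, y ≠ f i n := by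
    intro n
    have : ((Finset.range n).image fun i => f i n).card < Fintype.card (F n) :=
      lt_of_le_of_lt (Finset.card_image_le.trans (by simp)) (hcard n)
    obtain ⟨y, hy⟩ := Finset.exists_mem_notMem_of_card_lt_card (t := Finset.univ)
      (by simpa using this)
    refine ⟨y, fun i hi h => hy.2 ?_⟩
    exact Finset.mem_image.mpr ⟨i, by simpa using hi, h.symm⟩
  choose g hg using hex
  obtain ⟨i, hi⟩ := he (Ideal.Quotient.mk M g)
  rw [← hf i, Ideal.Quotient.eq] at hi
  refine hM.ne_top ((Ideal.eq_top_iff_one _).mpr ?_)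
  have h1 : (1 - (f i - g)⁻¹ * (f i - g)) ∈ M := by
    refine hJM ⟨i + 1, fun n hn => ?_⟩
    have : f i n - g n ≠ 0 := sub_ne_zero.mpr (hg n i hn).symm
    simp [inv_mul_cancel₀ this]
  have h2 := M.add_mem h1 (M.mul_mem_left (f i - g)⁻¹ hi)
  simpa using h2

theorem prod_chain (F : ℕ → Type*) [∀ n, Field (F n)] [∀ n, Fintype (F n)]
    (hq : StrictMono fun n => Fintype.card (F n)) :
    ∃ S : ℕ → Subring (∀ n, F n), StrictMono S ∧ ∀ x, ∃ t, x ∈ S t := by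
  obtain ⟨M, hM, hu⟩ := prod_quotient F hq
  letI := Ideal.Quotient.field M
  obtain ⟨S, hS, hS'⟩ := field_chain ((∀ n, F n) ⧸ M)
  refine ⟨fun t => (S t).comap (Ideal.Quotient.mk M), strictMono_nat_of_lt_succ fun t => ?_,
    fun x => hS' _⟩
  obtain ⟨h1, y, hy, hynot⟩ := SetLike.lt_iff_le_and_exists.mp (hS (Nat.lt_succ_self t))
  obtain ⟨x, rfl⟩ := Ideal.Quotient.mk_surjective y
  exact SetLike.lt_iff_le_and_exists.mpr ⟨fun z hz => h1 hz, x, hy, hynot⟩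

/-- The entries of an element of the product of the special linear groups, as elements of
the product ring. -/
def entry {d : ℕ} {F : ℕ → Type*} [∀ n, Field (F n)]
    (g : ∀ n, Matrix.SpecialLinearGroup (Fin d) (F n)) : Matrix (Fin d) (Fin d) (∀ n, F n) :=
  fun i j n => g n i j

theorem entry_mul {d : ℕ} {F : ℕ → Type*} [∀ n, Field (F n)]
    (g h : ∀ n, Matrix.SpecialLinearGroup (Fin d) (F n)) :
    entry (g * h) = entry g * entry h := by
  ext i j n
  simp [entry, Matrix.mul_apply]

theorem entry_one {d : ℕ} {F : ℕ → Type*} [∀ n, Field (F n)] :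
    entry (1 : ∀ n, Matrix.SpecialLinearGroup (Fin d) (F n)) = 1 := by
  ext i j n
  by_cases h : i = j <;> simp [entry, Matrix.one_apply, h]

theorem entry_inv {d : ℕ} {F : ℕ → Type*} [∀ n, Field (F n)]
    (g : ∀ n, Matrix.SpecialLinearGroup (Fin d) (F n)) :
    entry g⁻¹ = (entry g).adjugate := by
  ext i j n
  have := RingHom.map_adjugate (Pi.evalRingHom F n) (entry g)
  have := congrFun (congrFun this i) j
  simp only [RingHom.mapMatrix_apply, Matrix.map_apply, Pi.evalRingHom_apply] at this
  rw [this]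
  simp only [entry, Pi.inv_apply, Matrix.SpecialLinearGroup.coe_inv]
  rfl

/-- The subgroup of elements with all entries in a subring. -/
def entrySubgroup {d : ℕ} {F : ℕ → Type*} [∀ n, Field (F n)] (S : Subring (∀ n, F n)) :
    Subgroup (∀ n, Matrix.SpecialLinearGroup (Fin d) (F n)) where
  carrier := {g | ∀ i j, entry g i j ∈ S}
  mul_mem' := by
    intro g h hg hh i j
    rw [entry_mul, Matrix.mul_apply]
    exact S.sum_mem fun k _ => S.mul_mem (hg i k) (hh k j)
  one_mem' := by
    intro i j
    rw [entry_one, Matrix.one_apply]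
    split_ifs
    exacts [S.one_mem, S.zero_mem]
  inv_mem' := by
    intro g hg i j
    rw [entry_inv]
    let A : Matrix (Fin d) (Fin d) S := fun i j => ⟨entry g i j, hg i j⟩
    have h := congrFun (congrFun (RingHom.map_adjugate S.subtype A) i) j
    have hA : S.subtype.mapMatrix A = entry g := rfl
    rw [hA] at h
    rw [← h]
    exact (A.adjugate i j).2

/-- Fix `d ≥ 2` and a strictly increasing sequence of prime powers `qₙ` (realized as the
cardinalities of a sequence of finite fields `Fₙ`). Then `c(∏ n, SL(d, Fₙ)) = ω`:
the full direct product is the union of a strictly increasing countable chain of proper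
subgroups. -/
theorem stmt_3 (d : ℕ) (hd : 2 ≤ d) (F : ℕ → Type*) [∀ n, Field (F n)] [∀ n, Fintype (F n)]
    (hq : StrictMono fun n => Fintype.card (F n)) :
    ∃ H : ℕ → Subgroup (∀ n, Matrix.SpecialLinearGroup (Fin d) (F n)),
      StrictMono H ∧ (∀ t, H t ≠ ⊤) ∧
        ∀ g : ∀ n, Matrix.SpecialLinearGroup (Fin d) (F n), ∃ t, g ∈ H t := by
  obtain ⟨S, hS, hS'⟩ := prod_chain F hq
  let H : ℕ → Subgroup (∀ n, Matrix.SpecialLinearGroup (Fin d) (F n)) :=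
    fun t => entrySubgroup (S t)
  have hH : StrictMono H := by
    refine strictMono_nat_of_lt_succ fun t => ?_
    obtain ⟨h1, a, ha, ha'⟩ := SetLike.lt_iff_le_and_exists.mp (hS (Nat.lt_succ_self t))
    let i₀ : Fin d := ⟨0, by omega⟩
    let j₀ : Fin d := ⟨1, by omega⟩
    have hij : i₀ ≠ j₀ := by simp [i₀, j₀]
    let g : ∀ n, Matrix.SpecialLinearGroup (Fin d) (F n) := fun n =>
      ⟨Matrix.transvection i₀ j₀ (a n), Matrix.det_transvection_of_ne _ _ hij _⟩
    have hg : entry g = Matrix.transvection i₀ j₀ a := by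
      ext i j n
      change Matrix.transvection i₀ j₀ (a n) i j = _
      simp only [Matrix.transvection, Matrix.add_apply, Matrix.one_apply, Matrix.single_apply,
        Pi.add_apply]
      split_ifs <;> rfl
    refine SetLike.lt_iff_le_and_exists.mpr ⟨fun x hx i j => h1 (hx i j), g, ?_, fun h => ?_⟩
    · intro i j
      rw [hg]
      simp only [Matrix.transvection, Matrix.add_apply, Matrix.one_apply, Matrix.single_apply]
      refine (S (t + 1)).add_mem ?_ ?_
      · split_ifs
        exacts [Subring.one_mem _, Subring.zero_mem _]
      · split_ifs
        exacts [ha, Subring.zero_mem _]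
    · have := h i₀ j₀
      rw [hg] at this
      simp [Matrix.transvection, Matrix.one_apply, hij] at this
      exact ha' this
  refine ⟨H, hH, fun t => ?_, fun g => ?_⟩
  · exact ((hH (Nat.lt_succ_self t)).trans_le le_top).ne
  · choose T hT using fun i j => hS' (entry g i j)
    refine ⟨Finset.univ.sup fun p : Fin d × Fin d => T p.1 p.2, fun i j => ?_⟩
    exact hS.monotone
      (Finset.le_sup (f := fun p : Fin d × Fin d => T p.1 p.2) (Finset.mem_univ (i, j))) (hT i j)
end

section
/- Let (m_n)_{n∈ℕ} be a sequence of integers with m_n ≥ 5 for all n, and let S_n = Alt(m_n) be the alternating group on m_n letters. Then c(∏_{n∈ℕ} S_n) > ω; that is, the full direct product ∏_n Alt(m_n) cannot be written as the union of a countable increasing chain of proper subgroups. -/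
open Equiv Equiv.Perm

theorem aux_extend {α : Type*} [DecidableEq α] (B : Finset α) (l : List α) (hl : l.Nodup)
    (hB : ∀ x, x ∈ l ↔ x ∈ B) (p q r : α) (hpq : p ≠ q) (hp : p ∉ B) (hq : q ∉ B) (hr : r ∈ B) :
    ∃ l' : List α, l'.Nodup ∧ (∀ x, x ∈ l' ↔ (x = p ∨ x = q ∨ x ∈ B)) ∧
      l'.formPerm = swap p q * swap q r * l.formPerm := by
  obtain ⟨s, t, rfl⟩ := List.append_of_mem ((hB r).2 hr)
  have hrot : (s ++ r :: t) ~r (r :: t ++ s) := List.isRotated_append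
  have hnd : (r :: t ++ s).Nodup := hrot.nodup_iff.1 hl
  have hmem : ∀ x, x ∈ (r :: t ++ s) ↔ x ∈ B := fun x => by rw [← hrot.mem_iff, hB]
  refine ⟨p :: q :: (r :: t ++ s), ?_, ?_, ?_⟩
  · rw [List.nodup_cons, List.nodup_cons, List.mem_cons, hmem, hmem]
    tauto
  · intro x
    rw [List.mem_cons, List.mem_cons, hmem]
  · rw [List.formPerm_eq_of_isRotated hl hrot, List.cons_append, List.formPerm_cons_cons,
      List.formPerm_cons_cons, mul_assoc]

theorem aux_mem {α : Type*} (B : Finset α) (g : Perm α) (hg : ∀ x, x ∉ B → g x = x) (x : α) :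
    g x ∈ B ↔ x ∈ B := by
  constructor
  · intro h
    by_contra hx
    rw [hg x hx] at h
    exact hx h
  · intro h
    by_contra hx
    have := g.injective (hg _ hx)
    rw [this] at hx
    exact hx h

theorem aux_two_cycles {α : Type*} [DecidableEq α] [Fintype α] (k : ℕ) : ∀ (B : Finset α),
    B.card = k → ∀ (g : Perm α), (∀ x, x ∉ B → g x = x) → sign g = 1 →
    ∃ l₁ l₂ : List α, l₁.Nodup ∧ l₂.Nodup ∧ (∀ x, x ∈ l₁ ↔ x ∈ B) ∧ (∀ x, x ∈ l₂ ↔ x ∈ B) ∧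
      g = (l₁.formPerm)⁻¹ * l₂.formPerm := by
  induction k using Nat.strong_induction_on with
  | _ k ih =>
  intro B hBk g hg hs
  -- generic step
  have step : ∀ p q : α, p ≠ q → p ∈ B → q ∈ B → ∀ r s, r ∈ (B.erase p).erase q →
      s ∈ (B.erase p).erase q →
      ∀ π : Perm α, sign π = 1 → (∀ x, x ∉ B → π x = x) → π p = g p → π q = g q →
      ((π = (swap q p * swap p r)⁻¹ * (swap p q * swap q s)) ∨
       (π = (swap p q * swap q r)⁻¹ * (swap q p * swap p s))) →
      ∃ l₁ l₂ : List α, l₁.Nodup ∧ l₂.Nodup ∧ (∀ x, x ∈ l₁ ↔ x ∈ B) ∧ (∀ x, x ∈ l₂ ↔ x ∈ B) ∧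
      g = (l₁.formPerm)⁻¹ * l₂.formPerm := by
    intro p q hpq hp hq r s hr hs' π hπ hπB hπp hπq hcase
    set B' := (B.erase p).erase q with hB'
    have hB'mem : ∀ x, x ∈ B' ↔ x ≠ q ∧ x ≠ p ∧ x ∈ B := by
      intro x; simp [hB']
    have hcard : B'.card < k := by
      rw [← hBk]
      apply Finset.card_lt_card
      refine ⟨fun x hx => ((hB'mem x).1 hx).2.2, fun h => ?_⟩
      exact ((hB'mem p).1 (h hp)).2.1 rfl
    obtain ⟨l₁, l₂, h1, h2, h3, h4, h5⟩ := ih _ hcard B' rfl (π⁻¹ * g) (by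
      intro x hx
      rw [hB'mem] at hx
      rw [Perm.mul_apply, Perm.inv_eq_iff_eq]
      by_cases hxq : x = q
      · subst hxq; exact hπq.symm
      by_cases hxp : x = p
      · subst hxp; exact hπp.symm
      have : x ∉ B := by tauto
      rw [hg x this, hπB x this]) (by simp [hπ, hs])
    have hp' : p ∉ B' := fun h => ((hB'mem p).1 h).2.1 rfl
    have hq' : q ∉ B' := fun h => ((hB'mem q).1 h).1 rfl
    have hc : ∀ x, x ∉ B' → l₁.formPerm x = x := fun x hx =>
      List.formPerm_apply_of_notMem (fun h => hx ((h3 x).1 h))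
    have hcp := hc p hp'
    have hcq := hc q hq'
    have hcm : ∀ x, x ∈ B' → l₁.formPerm x ∈ B' := fun x hx => (aux_mem B' _ hc x).2 hx
    have hgπ : g = π * (l₁.formPerm⁻¹ * l₂.formPerm) := by rw [← h5]; group
    have hfin : ∀ x, (x = p ∨ x = q ∨ x ∈ B') ↔ x ∈ B := by
      intro x
      rw [hB'mem]
      by_cases hxq : x = q
      · subst hxq; simp [hq]
      by_cases hxp : x = p
      · subst hxp; simp [hp]
      tauto
    have hfin' : ∀ x, (x = q ∨ x = p ∨ x ∈ B') ↔ x ∈ B := by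
      intro x
      rw [← hfin]; tauto
    have hconj : ∀ a b, swap (l₁.formPerm a) (l₁.formPerm b) =
        l₁.formPerm * swap a b * l₁.formPerm⁻¹ := by
      intro a b
      rw [Equiv.mul_swap_eq_swap_mul]; group
    have c1 : ∀ x, swap q (l₁.formPerm x) = l₁.formPerm * swap q x * l₁.formPerm⁻¹ := by
      intro x; rw [← hconj, hcq]
    have c2 : ∀ x, swap p (l₁.formPerm x) = l₁.formPerm * swap p x * l₁.formPerm⁻¹ := by
      intro x; rw [← hconj, hcp]
    have c3 : swap p q = l₁.formPerm * swap p q * l₁.formPerm⁻¹ := by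
      rw [← hconj, hcp, hcq]
    have c4 : swap q p = l₁.formPerm * swap q p * l₁.formPerm⁻¹ := by
      rw [← hconj, hcp, hcq]
    rcases hcase with hcase | hcase
    · obtain ⟨l₁', e1, e2, e3⟩ := aux_extend B' l₁ h1 h3 q p _ hpq.symm hq' hp' (hcm r hr)
      obtain ⟨l₂', f1, f2, f3⟩ := aux_extend B' l₂ h2 h4 p q _ hpq hp' hq' (hcm s hs')
      refine ⟨l₁', l₂', e1, f1, fun x => (e2 x).trans (hfin' x), fun x => (f2 x).trans (hfin x), ?_⟩
      rw [e3, f3, hgπ, hcase, c1, c2]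
      nth_rewrite 2 [c3]
      nth_rewrite 2 [c4]
      group
    · obtain ⟨l₁', e1, e2, e3⟩ := aux_extend B' l₁ h1 h3 p q _ hpq hp' hq' (hcm r hr)
      obtain ⟨l₂', f1, f2, f3⟩ := aux_extend B' l₂ h2 h4 q p _ hpq.symm hq' hp' (hcm s hs')
      refine ⟨l₁', l₂', e1, f1, fun x => (e2 x).trans (hfin x), fun x => (f2 x).trans (hfin' x), ?_⟩
      rw [e3, f3, hgπ, hcase, c1, c2]
      nth_rewrite 2 [c3]
      nth_rewrite 2 [c4]
      group
  by_cases hg1 : g = 1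
  · refine ⟨B.toList, B.toList, B.nodup_toList, B.nodup_toList, by simp, by simp, by simp [hg1]⟩
  obtain ⟨p, hp⟩ : ∃ p, g p ≠ p := by
    by_contra! h
    exact hg1 (Equiv.ext h)
  have hpB : p ∈ B := by
    by_contra h; exact hp (hg p h)
  have hgB := aux_mem B g hg
  by_cases hgg : g (g p) = p
  · -- two-cycle case
    obtain ⟨q, hq1, hq2, hq3⟩ : ∃ q, q ≠ p ∧ q ≠ g p ∧ g q ≠ q := by
      by_contra! h
      have : g = swap p (g p) := by
        ext x
        by_cases hx : x = p
        · subst hx; simp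
        by_cases hx' : x = g p
        · rw [hx', hgg]; simp
        · rw [swap_apply_of_ne_of_ne hx hx', h x hx hx']
      rw [this, sign_swap hp.symm] at hs
      exact absurd hs (by decide)
    have hqB : q ∈ B := by
      by_contra h; exact hq3 (hg q h)
    have n1 : g q ≠ p := fun h => hq2 (by apply g.injective; rw [h, hgg])
    have n2 : g q ≠ g p := fun h => hq1 (g.injective h)
    refine step p q hq1.symm hpB hqB (g p) (g q) ?_ ?_
      ((swap q p * swap p (g p))⁻¹ * (swap p q * swap q (g q))) ?_ ?_ ?_ ?_ (Or.inl rfl)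
    · simp [hq2.symm, hp, hgB, hpB]
    · simp [hq3, n1, hgB, hqB]
    · simp [sign_swap hq1, sign_swap hq1.symm, sign_swap hp.symm, sign_swap hq3.symm]
    · intro x hx
      have a1 : x ≠ p := fun h => hx (h ▸ hpB)
      have a2 : x ≠ q := fun h => hx (h ▸ hqB)
      have a3 : x ≠ g p := fun h => hx (h ▸ (hgB p).2 hpB)
      have a4 : x ≠ g q := fun h => hx (h ▸ (hgB q).2 hqB)
      simp [swap_apply_of_ne_of_ne, a1, a2, a3, a4]
    · simp only [mul_inv_rev, swap_inv, Perm.mul_apply]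
      rw [swap_apply_of_ne_of_ne hq1.symm n1.symm, swap_apply_left, swap_apply_left,
        swap_apply_left]
    · simp only [mul_inv_rev, swap_inv, Perm.mul_apply]
      rw [swap_apply_left, swap_apply_of_ne_of_ne n1 hq3, swap_apply_of_ne_of_ne hq3 n1,
        swap_apply_of_ne_of_ne n1 n2]
  · have n1 : g (g p) ≠ g p := fun h => hp (g.injective h)
    refine step p (g p) hp.symm hpB ((hgB p).2 hpB) (g (g p)) (g (g p)) ?_ ?_
      ((swap p (g p) * swap (g p) (g (g p)))⁻¹ * (swap (g p) p * swap p (g (g p)))) ?_ ?_ ?_ ?_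
      (Or.inr rfl)
    · simp [n1, hgg, hgB, hpB]
    · simp [n1, hgg, hgB, hpB]
    · simp [sign_swap hp, sign_swap hp.symm, sign_swap n1.symm, sign_swap (Ne.symm hgg)]
    · intro x hx
      have a1 : x ≠ p := fun h => hx (h ▸ hpB)
      have a3 : x ≠ g p := fun h => hx (h ▸ (hgB p).2 hpB)
      have a4 : x ≠ g (g p) := fun h => hx (h ▸ (hgB _).2 ((hgB p).2 hpB))
      simp [swap_apply_of_ne_of_ne, a1, a3, a4]
    · simp only [mul_inv_rev, swap_inv, Perm.mul_apply]
      rw [swap_apply_left, swap_apply_of_ne_of_ne n1 hgg, swap_apply_of_ne_of_ne hgg n1,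
        swap_apply_right]
    · simp only [mul_inv_rev, swap_inv, Perm.mul_apply]
      rw [swap_apply_of_ne_of_ne hp n1.symm, swap_apply_left, swap_apply_left, swap_apply_left]

theorem aux_formPerm_map {α : Type*} [DecidableEq α] (σ : Perm α) (l : List α) :
    (l.map σ).formPerm = σ * l.formPerm * σ⁻¹ := by
  induction l with
  | nil => simp
  | cons a t ih =>
    cases t with
    | nil => simp
    | cons b t =>
      rw [List.map_cons] at ih
      rw [List.map_cons, List.map_cons, List.formPerm_cons_cons, ih, List.formPerm_cons_cons,
        ← mul_assoc σ, Equiv.mul_swap_eq_swap_mul]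
      group

theorem aux_list_perm {α : Type*} [DecidableEq α] {l₁ l₂ : List α} (h : l₁.Perm l₂) :
    l₁.Nodup → ∃ σ : Perm α, (∀ x, x ∉ l₁ → σ x = x) ∧ l₁.map σ = l₂ := by
  induction h with
  | nil => intro _; exact ⟨1, by simp, by simp⟩
  | cons x h ih =>
    intro hn
    rw [List.nodup_cons] at hn
    obtain ⟨σ, h1, h2⟩ := ih hn.2
    refine ⟨σ, fun y hy => h1 y (fun h => hy (List.mem_cons_of_mem _ h)), ?_⟩
    rw [List.map_cons, h2, h1 x hn.1]
  | swap x y l =>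
    intro hn
    simp only [List.nodup_cons, List.mem_cons, not_or] at hn
    refine ⟨swap x y, fun z hz => ?_, ?_⟩
    · simp only [List.mem_cons, not_or] at hz
      exact swap_apply_of_ne_of_ne hz.2.1 hz.1
    · simp only [List.map_cons, swap_apply_left, swap_apply_right, List.cons.injEq, true_and]
      conv_rhs => rw [← List.map_id l]
      apply List.map_congr_left
      intro z hz
      exact swap_apply_of_ne_of_ne (fun h => hn.2.1 (h ▸ hz)) (fun h => hn.1.2 (h ▸ hz))
  | trans h h' ih ih' =>
    intro hn
    obtain ⟨σ, h1, h2⟩ := ih hn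
    obtain ⟨τ, h3, h4⟩ := ih' (h.nodup hn)
    refine ⟨τ * σ, fun x hx => ?_, ?_⟩
    · rw [Perm.mul_apply, h1 x hx, h3 x (fun hh => hx (h.mem_iff.2 hh))]
    · rw [← h4, ← h2, List.map_map]; rfl

/-- every even permutation of `B` is a product of two conjugates of a fixed element -/
theorem aux_cover {α : Type*} [DecidableEq α] [Fintype α] (A B : Finset α) (hBA : B ⊆ A)
    (r₁ r₂ : α) (h12 : r₁ ≠ r₂) (h1 : r₁ ∉ B) (h2 : r₂ ∉ B) (h1' : r₁ ∈ A) (h2' : r₂ ∈ A) :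
    ∃ x : alternatingGroup α, (∀ y, y ∉ A → (x : Perm α) y = y) ∧
      ∀ g : alternatingGroup α, (∀ y, y ∉ B → (g : Perm α) y = y) →
      ∃ ρ σ : alternatingGroup α, (∀ y, y ∉ A → (ρ : Perm α) y = y) ∧
        (∀ y, y ∉ A → (σ : Perm α) y = y) ∧ g = ρ * x⁻¹ * ρ⁻¹ * (σ * x * σ⁻¹) := by
  have hcomm : ∀ u : Perm α, (∀ y, y ∉ B → u y = y) → swap r₁ r₂ * u = u * swap r₁ r₂ := by
    intro u hu
    rw [Equiv.mul_swap_eq_swap_mul, hu _ h1, hu _ h2]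
  have hA : ∀ u : Perm α, (∀ y, y ∉ B → u y = y) → ∀ y, y ∉ A → u y = y :=
    fun u hu y hy => hu y (fun h => hy (hBA h))
  have hfix : ∀ u : Perm α, (∀ y, y ∉ B → u y = y) →
      ∃ (v : alternatingGroup α) (t : Perm α), (v : Perm α) = u * t ∧ (t = 1 ∨ t = swap r₁ r₂) ∧
      (∀ y, y ∉ A → (v : Perm α) y = y) := by
    intro u hu
    rcases Int.units_eq_one_or (sign u) with h | h
    · exact ⟨⟨u, mem_alternatingGroup.2 h⟩, 1, by simp, Or.inl rfl, hA u hu⟩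
    · refine ⟨⟨u * swap r₁ r₂, mem_alternatingGroup.2 (by simp [h, sign_swap h12])⟩, swap r₁ r₂,
        by simp, Or.inr rfl, ?_⟩
      intro y hy
      simp only [Perm.mul_apply]
      have y1 : y ≠ r₁ := by rintro rfl; exact hy h1'
      have y2 : y ≠ r₂ := by rintro rfl; exact hy h2'
      rw [swap_apply_of_ne_of_ne y1 y2, hA u hu y hy]
  set c := B.toList.formPerm with hc
  have hcB : ∀ y, y ∉ B → c y = y := fun y hy =>
    List.formPerm_apply_of_notMem (by simpa using hy)
  obtain ⟨x, t, hx, ht, hxA⟩ := hfix c hcB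
  refine ⟨x, hxA, fun g hg => ?_⟩
  obtain ⟨l₁, l₂, n1, n2, m1, m2, e⟩ := aux_two_cycles B.card B rfl g hg
    (mem_alternatingGroup.1 g.2)
  have key : ∀ l : List α, l.Nodup → (∀ x, x ∈ l ↔ x ∈ B) → ∃ σ : alternatingGroup α,
      (∀ y, y ∉ A → (σ : Perm α) y = y) ∧ ((σ * x * σ⁻¹ : alternatingGroup α) : Perm α) =
        l.formPerm * t := by
    intro l hl hlB
    have hp : B.toList.Perm l :=
      (List.perm_ext_iff_of_nodup B.nodup_toList hl).2 (fun a => by simp [hlB])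
    obtain ⟨σ, s1, s2⟩ := aux_list_perm hp B.nodup_toList
    have s1' : ∀ y, y ∉ B → σ y = y := fun y hy => s1 y (by simpa using hy)
    obtain ⟨σ', t', hσ', ht', hσA⟩ := hfix σ s1'
    refine ⟨σ', hσA, ?_⟩
    have htt : t' * t = t * t' := by
      rcases ht with rfl | rfl <;> rcases ht' with rfl | rfl <;> simp
    have htc : t' * c = c * t' := by
      rcases ht' with rfl | rfl
      · simp
      · exact hcomm c hcB
    have htσ : t * σ⁻¹ = σ⁻¹ * t := by
      have : t * σ = σ * t := by
        rcases ht with rfl | rfl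
        · simp
        · exact hcomm σ s1'
      rw [mul_inv_eq_iff_eq_mul, mul_assoc, this]; group
    rw [← s2, aux_formPerm_map]
    push_cast
    rw [hσ', hx]
    calc σ * t' * (c * t) * (σ * t')⁻¹ = σ * (t' * c) * t * t'⁻¹ * σ⁻¹ := by group
      _ = σ * c * (t' * t) * t'⁻¹ * σ⁻¹ := by rw [htc]; group
      _ = σ * c * (t * σ⁻¹) := by rw [htt]; group
      _ = _ := by rw [htσ, hc]; group
  obtain ⟨ρ, r1, r2⟩ := key l₁ n1 m1
  obtain ⟨σ, s1, s2⟩ := key l₂ n2 m2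
  refine ⟨ρ, σ, r1, s1, ?_⟩
  have hd : t⁻¹ * (l₁.formPerm)⁻¹ * (l₂.formPerm * t) = g := by
    rw [e]
    have ht2 : (l₁.formPerm⁻¹ * l₂.formPerm) * t = t * (l₁.formPerm⁻¹ * l₂.formPerm) := by
      rw [← e]
      rcases ht with rfl | rfl
      · simp
      · exact (hcomm _ hg).symm
    rw [mul_assoc, ← mul_assoc (l₁.formPerm)⁻¹, ht2]; group
  apply Subtype.ext
  have e1 : ρ * x⁻¹ * ρ⁻¹ = (ρ * x * ρ⁻¹)⁻¹ := by group
  rw [e1, Subgroup.coe_mul, Subgroup.coe_inv, r2, s2, ← hd, mul_inv_rev]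

/-! ### The product group and its support subgroups -/

abbrev PG (m : ℕ → ℕ) : Type := ∀ n, ↥(alternatingGroup (Fin (m n)))

def SG {m : ℕ → ℕ} (A : ∀ n, Finset (Fin (m n))) : Subgroup (PG m) where
  carrier := {g | ∀ n x, x ∉ A n → (g n : Perm (Fin (m n))) x = x}
  one_mem' := by intro n x _; rfl
  mul_mem' := by
    intro a b ha hb n x hx
    have h1 := ha n x hx
    have h2 := hb n x hx
    simp only [Pi.mul_apply, Subgroup.coe_mul, Perm.mul_apply]
    rw [h2, h1]
  inv_mem' := by
    intro a ha n x hx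
    have h1 := ha n x hx
    simp only [Pi.inv_apply, Subgroup.coe_inv]
    rw [Perm.inv_eq_iff_eq, h1]

theorem mem_SG {m : ℕ → ℕ} (A : ∀ n, Finset (Fin (m n))) (g : PG m) :
    g ∈ SG A ↔ ∀ n x, x ∉ A n → (g n : Perm (Fin (m n))) x = x := Iff.rfl

theorem SG_mono {m : ℕ → ℕ} {A B : ∀ n, Finset (Fin (m n))} (h : ∀ n, A n ⊆ B n) :
    SG A ≤ SG B := fun _ hg n x hx => hg n x (fun hh => hx (h n hh))

theorem aux_combine {α : Type*} [DecidableEq α] [Fintype α] (A : ℕ → Finset α)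
    (hA : ∀ i j, i ≠ j → Disjoint (A i) (A j)) (p : ℕ → alternatingGroup α)
    (hp : ∀ k x, x ∉ A k → (p k : Perm α) x = x) (K : ℕ) :
    ∃ P : alternatingGroup α, (∀ k, k < K → ∀ x ∈ A k, (P : Perm α) x = (p k : Perm α) x) ∧
      ∀ x, (∀ k, k < K → x ∉ A k) → (P : Perm α) x = x := by
  induction K with
  | zero => exact ⟨1, by simp, by simp⟩
  | succ K ih =>
    obtain ⟨P, h1, h2⟩ := ih
    refine ⟨P * p K, ?_, ?_⟩
    · intro k hk x hx
      simp only [Subgroup.coe_mul, Perm.mul_apply]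
      by_cases hkK : k = K
      · subst hkK
        have hm := (aux_mem (A k) (p k : Perm α) (hp k) x).2 hx
        exact h2 _ fun j hj hj' => Finset.disjoint_left.1 (hA j k (by omega)) hj' hm
      · rw [hp K x (fun h => Finset.disjoint_left.1 (hA k K hkK) hx h)]
        exact h1 k (by omega) x hx
    · intro x hx
      simp only [Subgroup.coe_mul, Perm.mul_apply]
      rw [hp K x (hx K (by omega)), h2 x (fun k hk => hx k (by omega))]

theorem aux_induce {m : ℕ → ℕ} (H : ℕ → Subgroup (PG m)) (hH : Monotone H)
    (hU : ∀ g, ∃ t, g ∈ H t) (A : ℕ → ∀ n, Finset (Fin (m n)))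
    (hA : ∀ i j, i ≠ j → ∀ n, Disjoint (A i n) (A j n))
    (hfin : ∀ n, ∃ K, ∀ k, K ≤ k → A k n = ∅) (f : ℕ → ℕ) (hf : ∀ k, k ≤ f k) :
    ∃ k, ∀ g ∈ SG (A k), ∃ h ∈ H (f k), ∀ n, ∀ x ∈ A k n,
      (h n : Perm (Fin (m n))) x = (g n : Perm (Fin (m n))) x := by
  by_contra! hcon
  choose g hg hgn using hcon
  choose K hK using hfin
  have hP := fun n => aux_combine (fun k => A k n) (fun i j hij => hA i j hij n) (fun k => g k n)
    (fun k x hx => hg k n x hx) (K n)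
  choose P hP1 hP2 using hP
  obtain ⟨t, ht⟩ := hU P
  obtain ⟨n, x, hx, hne⟩ := hgn t P (hH (hf t) ht)
  refine hne (hP1 n t ?_ x hx)
  by_contra hlt
  rw [hK n t (by omega)] at hx
  simp at hx

theorem aux_conj {m : ℕ → ℕ} (A : ∀ n, Finset (Fin (m n))) (h σ x : PG m) (_hσ : σ ∈ SG A)
    (hx : x ∈ SG A) (hh : ∀ n, ∀ y ∈ A n, (h n : Perm (Fin (m n))) y = (σ n : Perm (Fin (m n))) y) :
    h * x * h⁻¹ = σ * x * σ⁻¹ := by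
  suffices hs : ∀ y, y ∈ SG A → h * y * h⁻¹ = σ * y * σ⁻¹ from hs x hx
  intro x hx
  suffices hc : (h⁻¹ * σ) * x = x * (h⁻¹ * σ) by
    have e : h * ((h⁻¹ * σ) * x) * σ⁻¹ = h * (x * (h⁻¹ * σ)) * σ⁻¹ := by rw [hc]
    have e1 : h * ((h⁻¹ * σ) * x) * σ⁻¹ = σ * x * σ⁻¹ := by group
    have e2 : h * (x * (h⁻¹ * σ)) * σ⁻¹ = h * x * h⁻¹ := by group
    rw [← e1, e, e2]
  have hu : ∀ n, ∀ y ∈ A n, ((h⁻¹ * σ) n : Perm (Fin (m n))) y = y := by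
    intro n y hy
    simp only [Pi.mul_apply, Pi.inv_apply, Subgroup.coe_mul, Subgroup.coe_inv, Perm.mul_apply]
    rw [Perm.inv_eq_iff_eq, hh n y hy]
  generalize h⁻¹ * σ = u at hu
  funext n
  apply Subtype.ext
  ext1 y
  simp only [Pi.mul_apply, Subgroup.coe_mul, Perm.mul_apply]
  by_cases hy : y ∈ A n
  · rw [hu n y hy, hu n _ ((aux_mem (A n) _ (hx n) y).2 hy)]
  · rw [hx n y hy]
    symm
    apply hx n
    intro hc
    have := (u n : Perm (Fin (m n))).injective (hu n _ hc)
    rw [this] at hc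
    exact hy hc

theorem aux_key {m : ℕ → ℕ} (H : ℕ → Subgroup (PG m)) (hH : Monotone H)
    (hU : ∀ g, ∃ t, g ∈ H t) (A B : ℕ → ∀ n, Finset (Fin (m n)))
    (hA : ∀ i j, i ≠ j → ∀ n, Disjoint (A i n) (A j n))
    (hfin : ∀ n, ∃ K, ∀ k, K ≤ k → A k n = ∅)
    (hB : ∀ k n, B k n = ∅ ∨ (B k n ⊆ A k n ∧ ∃ r₁ r₂, r₁ ≠ r₂ ∧ r₁ ∉ B k n ∧ r₂ ∉ B k n ∧
      r₁ ∈ A k n ∧ r₂ ∈ A k n)) :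
    ∃ k i, SG (B k) ≤ H i := by
  have hx : ∀ k n, ∃ x : alternatingGroup (Fin (m n)),
      (∀ y, y ∉ A k n → (x : Perm (Fin (m n))) y = y) ∧
      ∀ g : alternatingGroup (Fin (m n)), (∀ y, y ∉ B k n → (g : Perm (Fin (m n))) y = y) →
      ∃ ρ σ : alternatingGroup (Fin (m n)), (∀ y, y ∉ A k n → (ρ : Perm (Fin (m n))) y = y) ∧
        (∀ y, y ∉ A k n → (σ : Perm (Fin (m n))) y = y) ∧ g = ρ * x⁻¹ * ρ⁻¹ * (σ * x * σ⁻¹) := by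
    intro k n
    rcases hB k n with h | ⟨h, r₁, r₂, h1, h2, h3, h4, h5⟩
    · refine ⟨1, by simp, fun g hg => ⟨1, 1, by simp, by simp, ?_⟩⟩
      apply Subtype.ext
      ext1 y
      rw [hg y (by simp [h])]
      simp
    · exact aux_cover _ _ h r₁ r₂ h1 h2 h3 h4 h5
  choose x hx1 hx2 using hx
  choose f hf using fun k => hU (x k)
  obtain ⟨k, hk⟩ := aux_induce H hH hU A hA hfin (fun k => max k (f k)) (fun k => le_max_left _ _)
  refine ⟨k, max k (f k), fun g hg => ?_⟩
  choose ρ σ hρ hσ he using fun n => hx2 k n (g n) (hg n)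
  have hxk : x k ∈ H (max k (f k)) := hH (le_max_right _ _) (hf k)
  obtain ⟨h, hh, hh'⟩ := hk ρ hρ
  obtain ⟨h₂, hh₂, hh₂'⟩ := hk σ hσ
  have e : g = h * (x k)⁻¹ * h⁻¹ * (h₂ * x k * h₂⁻¹) := by
    rw [aux_conj (A k) h ρ _ hρ ((SG (A k)).inv_mem (hx1 k)) hh',
      aux_conj (A k) h₂ σ _ hσ (hx1 k) hh₂']
    funext n
    exact he n
  rw [e]
  exact mul_mem (mul_mem (mul_mem hh (inv_mem hxk)) (inv_mem hh))
    (mul_mem (mul_mem hh₂ hxk) (inv_mem hh₂))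

/-! ### Growing supports -/

theorem aux_into {α : Type*} [DecidableEq α] (B Y : Finset α) (hY : Y ⊆ B) (X : Finset α) :
    X ⊆ B → X.card ≤ Y.card →
    ∃ b : Perm α, (∀ x, x ∉ B → b x = x) ∧ ∀ x ∈ X, b x ∈ Y := by
  induction X using Finset.induction_on with
  | empty => intro _ _; exact ⟨1, by simp, by simp⟩
  | insert x₀ X hx₀ ih =>
    intro hX hc
    rw [Finset.card_insert_of_notMem hx₀] at hc
    obtain ⟨b, h1, h2⟩ := ih (fun x hx => hX (Finset.mem_insert_of_mem hx)) (by omega)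
    obtain ⟨y, hy, hy'⟩ : ∃ y ∈ Y, y ∉ X.image b := by
      by_contra! h
      have := Finset.card_le_card (show Y ⊆ X.image b from h)
      have := Finset.card_image_le (s := X) (f := b)
      omega
    have hbx₀ : b x₀ ∈ B := (aux_mem B b h1 x₀).2 (hX (Finset.mem_insert_self _ _))
    refine ⟨swap (b x₀) y * b, ?_, ?_⟩
    · intro x hx
      rw [Perm.mul_apply, h1 x hx, swap_apply_of_ne_of_ne]
      · rintro rfl; exact hx hbx₀
      · rintro rfl; exact hx (hY hy)
    · intro x hx
      rw [Perm.mul_apply]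
      rcases Finset.mem_insert.1 hx with rfl | hx
      · rw [swap_apply_left]; exact hy
      · rw [swap_apply_of_ne_of_ne]
        · exact h2 x hx
        · intro h
          rw [b.injective h] at hx
          exact hx₀ hx
        · intro h
          exact hy' (Finset.mem_image.2 ⟨x, hx, h⟩)

theorem aux_into_even {α : Type*} [DecidableEq α] [Fintype α] (B Y X : Finset α) (hY : Y ⊆ B)
    (hX : X ⊆ B) (hc : X.card ≤ Y.card) (h2 : 2 ≤ Y.card) :
    ∃ b : alternatingGroup α, (∀ x, x ∉ B → (b : Perm α) x = x) ∧ ∀ x ∈ X, (b : Perm α) x ∈ Y := by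
  obtain ⟨b, hb1, hb2⟩ := aux_into B Y hY X hX hc
  rcases Int.units_eq_one_or (sign b) with h | h
  · exact ⟨⟨b, mem_alternatingGroup.2 h⟩, hb1, hb2⟩
  · obtain ⟨y₁, hy₁, y₂, hy₂, hne⟩ := Finset.one_lt_card.1 h2
    refine ⟨⟨swap y₁ y₂ * b, mem_alternatingGroup.2 (by simp [h, sign_swap hne])⟩, ?_, ?_⟩
    · intro x hx
      change (swap y₁ y₂ * b) x = x
      rw [Perm.mul_apply, hb1 x hx, swap_apply_of_ne_of_ne]
      · rintro rfl; exact hx (hY hy₁)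
      · rintro rfl; exact hx (hY hy₂)
    · intro x hx
      change (swap y₁ y₂ * b) x ∈ Y
      rw [Perm.mul_apply]
      have := hb2 x hx
      rw [swap_apply_def]
      split_ifs <;> assumption

theorem aux_back {α : Type*} [DecidableEq α] (B : Finset α) (φ : Perm α) (E : Finset α) :
    E ⊆ B → (∀ e ∈ E, φ e ∈ B) →
    ∃ a : Perm α, (∀ x, x ∉ B → a x = x) ∧ ∀ e ∈ E, a (φ e) = e := by
  induction E using Finset.induction_on with
  | empty => intro _ _; exact ⟨1, by simp, by simp⟩
  | insert e₀ E he₀ ih =>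
    intro hE hφ
    obtain ⟨a, h1, h2⟩ := ih (fun x hx => hE (Finset.mem_insert_of_mem hx))
      (fun x hx => hφ x (Finset.mem_insert_of_mem hx))
    have hz : a (φ e₀) ∈ B := (aux_mem B a h1 _).2 (hφ _ (Finset.mem_insert_self _ _))
    refine ⟨swap (a (φ e₀)) e₀ * a, ?_, ?_⟩
    · intro x hx
      rw [Perm.mul_apply, h1 x hx, swap_apply_of_ne_of_ne]
      · rintro rfl; exact hx hz
      · rintro rfl; exact hx (hE (Finset.mem_insert_self _ _))
    · intro e he
      rw [Perm.mul_apply]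
      rcases Finset.mem_insert.1 he with rfl | he'
      · rw [swap_apply_left]
      · rw [h2 e he', swap_apply_of_ne_of_ne]
        · intro h
          have h3 : a (φ e) = a (φ e₀) := (h2 e he').trans h
          rw [φ.injective (a.injective h3)] at he'
          exact he₀ he'
        · rintro rfl; exact he₀ he'

theorem aux_union {α : Type*} [DecidableEq α] [Fintype α] (B B' : Finset α)
    (hc : 2 ≤ (B ∩ B').card) (hc' : (B' \ B).card ≤ (B ∩ B').card) (g : alternatingGroup α)
    (hg : ∀ x, x ∉ B ∪ B' → (g : Perm α) x = x) :
    ∃ b a b' : alternatingGroup α, (∀ x, x ∉ B → (b : Perm α) x = x) ∧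
      (∀ x, x ∉ B' → (a : Perm α) x = x) ∧ (∀ x, x ∉ B → (b' : Perm α) x = x) ∧
      g = b * a * b' := by
  set E := B' \ B with hE
  set X := (E.image (g : Perm α)) ∩ B with hX
  have hXc : X.card ≤ (B ∩ B').card := by
    refine le_trans (le_trans (Finset.card_le_card Finset.inter_subset_left) ?_) hc'
    exact Finset.card_image_le
  obtain ⟨b, hb1, hb2⟩ := aux_into_even B (B ∩ B') X Finset.inter_subset_left
    Finset.inter_subset_right hXc hc
  have hEB' : E ⊆ B' := Finset.sdiff_subset
  have hmv : ∀ e ∈ E, ((b : Perm α) * (g : Perm α)) e ∈ B' := by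
    intro e he
    rw [Perm.mul_apply]
    by_cases h : (g : Perm α) e ∈ B
    · have : (g : Perm α) e ∈ X := Finset.mem_inter.2 ⟨Finset.mem_image_of_mem _ he, h⟩
      exact (Finset.mem_inter.1 (hb2 _ this)).2
    · rw [hb1 _ h]
      have := (aux_mem (B ∪ B') (g : Perm α) hg e).2 (Finset.mem_union_right _ (hEB' he))
      rcases Finset.mem_union.1 this with h' | h'
      · exact absurd h' h
      · exact h'
  obtain ⟨a, ha1, ha2⟩ := aux_back B' ((b : Perm α) * (g : Perm α)) E hEB' hmv
  obtain ⟨a', ha1', ha2'⟩ : ∃ a' : alternatingGroup α, (∀ x, x ∉ B' → (a' : Perm α) x = x) ∧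
      ∀ e ∈ E, (a' : Perm α) (((b : Perm α) * (g : Perm α)) e) = e := by
    rcases Int.units_eq_one_or (sign a) with h | h
    · exact ⟨⟨a, mem_alternatingGroup.2 h⟩, ha1, ha2⟩
    · obtain ⟨y₁, hy₁, y₂, hy₂, hne⟩ := Finset.one_lt_card.1 hc
      rw [Finset.mem_inter] at hy₁ hy₂
      refine ⟨⟨swap y₁ y₂ * a, mem_alternatingGroup.2 (by simp [h, sign_swap hne])⟩, ?_, ?_⟩
      · intro x hx
        change (swap y₁ y₂ * a) x = x
        rw [Perm.mul_apply, ha1 x hx, swap_apply_of_ne_of_ne]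
        · rintro rfl; exact hx hy₁.2
        · rintro rfl; exact hx hy₂.2
      · intro e he
        change (swap y₁ y₂ * a) _ = e
        rw [Perm.mul_apply, ha2 e he]
        have heB := (Finset.mem_sdiff.1 he).2
        rw [swap_apply_of_ne_of_ne]
        · rintro rfl; exact heB hy₁.1
        · rintro rfl; exact heB hy₂.1
  refine ⟨b⁻¹, a'⁻¹, a' * b * g, ?_, ?_, ?_, by group⟩
  · intro x hx
    rw [Subgroup.coe_inv, Perm.inv_eq_iff_eq, hb1 x hx]
  · intro x hx
    rw [Subgroup.coe_inv, Perm.inv_eq_iff_eq, ha1' x hx]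
  · intro x hx
    by_cases hxB' : x ∈ B'
    · have := ha2' x (Finset.mem_sdiff.2 ⟨hxB', hx⟩)
      simpa [mul_assoc] using this
    · simp only [Subgroup.coe_mul, Perm.mul_apply]
      rw [hg x (by simp [hx, hxB']), hb1 x hx, ha1' x hxB']

theorem aux_union_group {m : ℕ → ℕ} (H : Subgroup (PG m)) (B B' : ∀ n, Finset (Fin (m n)))
    (hB : SG B ≤ H) (hB' : SG B' ≤ H)
    (hc : ∀ n, B' n ⊆ B n ∨
      (2 ≤ (B n ∩ B' n).card ∧ (B' n \ B n).card ≤ (B n ∩ B' n).card)) :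
    SG (fun n => B n ∪ B' n) ≤ H := by
  intro g hg
  have h : ∀ n, ∃ b a b' : alternatingGroup (Fin (m n)),
      (∀ x, x ∉ B n → (b : Perm (Fin (m n))) x = x) ∧
      (∀ x, x ∉ B' n → (a : Perm (Fin (m n))) x = x) ∧
      (∀ x, x ∉ B n → (b' : Perm (Fin (m n))) x = x) ∧ g n = b * a * b' := by
    intro n
    rcases hc n with h | ⟨h1, h2⟩
    · refine ⟨g n, 1, 1, ?_, by simp, by simp, by simp⟩
      intro x hx
      exact hg n x (by simp only [Finset.mem_union]; exact fun hh => hx (hh.elim id (fun k => h k)))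
    · exact aux_union _ _ h1 h2 (g n) (hg n)
  choose b a b' h1 h2 h3 h4 using h
  have e : g = b * a * b' := funext h4
  rw [e]
  exact mul_mem (mul_mem (hB h1) (hB' h2)) (hB h3)

theorem aux_apply_inv {α : Type*} (f : Perm α) (x : α) : f (f⁻¹ x) = x := f.apply_symm_apply x

theorem aux_move {m : ℕ → ℕ} (H : ℕ → Subgroup (PG m)) (hH : Monotone H)
    (hU : ∀ g, ∃ t, g ∈ H t) (X Y : ∀ n, Finset (Fin (m n)))
    (hc : ∀ n, Y n = ∅ ∨ (2 ≤ (X n).card ∧ (Y n).card ≤ (X n).card))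
    (hX : ∃ i, SG X ≤ H i) : ∃ i, SG Y ≤ H i := by
  obtain ⟨i, hi⟩ := hX
  have ht : ∀ n, ∃ t : alternatingGroup (Fin (m n)), ∀ y ∈ Y n,
      (t : Perm (Fin (m n))) y ∈ X n := by
    intro n
    rcases hc n with h | ⟨h1, h2⟩
    · exact ⟨1, by simp [h]⟩
    · obtain ⟨t, -, ht⟩ := aux_into_even Finset.univ (X n) (Y n) (Finset.subset_univ _)
        (Finset.subset_univ _) h2 h1
      exact ⟨t, ht⟩
  choose t ht using ht
  obtain ⟨j, hj⟩ := hU t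
  refine ⟨max i j, fun g hg => ?_⟩
  have htj : t ∈ H (max i j) := hH (le_max_right _ _) hj
  have h1 : t * g * t⁻¹ ∈ H (max i j) := by
    apply hH (le_max_left _ _)
    apply hi
    intro n x hx
    simp only [Pi.mul_apply, Pi.inv_apply, Subgroup.coe_mul, Subgroup.coe_inv, Perm.mul_apply]
    rw [hg n, aux_apply_inv]
    intro hy
    apply hx
    have := ht n _ hy
    rwa [aux_apply_inv] at this
  have e : g = t⁻¹ * (t * g * t⁻¹) * t := by group
  rw [e]
  exact mul_mem (mul_mem (inv_mem htj) h1) htj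

def iv (k a b : ℕ) : Finset (Fin k) := Finset.univ.filter (fun x => a ≤ x.1 ∧ x.1 < b)

theorem mem_iv (k a b : ℕ) (x : Fin k) : x ∈ iv k a b ↔ a ≤ x.1 ∧ x.1 < b := by
  simp [iv]

theorem iv_card_le (k a b : ℕ) : (iv k a b).card ≤ b - a := by
  rw [← Nat.card_Ico, ← Finset.card_image_of_injective _ Fin.val_injective]
  apply Finset.card_le_card
  intro x hx
  obtain ⟨y, hy, rfl⟩ := Finset.mem_image.1 hx
  rw [mem_iv] at hy
  exact Finset.mem_Ico.2 hy

theorem iv_card (k a b : ℕ) (hb : b ≤ k) : (iv k a b).card = b - a := by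
  apply le_antisymm (iv_card_le k a b)
  rw [← Nat.card_Ico, ← Finset.card_image_of_injective (iv k a b) Fin.val_injective]
  apply Finset.card_le_card
  intro x hx
  rw [Finset.mem_Ico] at hx
  exact Finset.mem_image.2 ⟨⟨x, by omega⟩, (mem_iv _ _ _ _).2 hx, rfl⟩

theorem aux_grow {m : ℕ → ℕ} (H : ℕ → Subgroup (PG m)) (hH : Monotone H)
    (hU : ∀ g, ∃ t, g ∈ H t) (X : ∀ n, Finset (Fin (m n))) (d : ℕ → ℕ)
    (hd : ∀ n, d n = 0 ∨ 2 ≤ d n) (hX : ∀ n, 2 * d n ≤ (X n).card) (hi : ∃ i, SG X ≤ H i) (j : ℕ) :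
    ∃ i, SG (fun n => iv (m n) 0 ((2 + j) * d n)) ≤ H i := by
  have mv : ∀ a : ℕ, ∃ i, SG (fun n => iv (m n) (a * d n) ((2 + a) * d n)) ≤ H i := by
    intro a
    refine aux_move H hH hU X _ (fun n => ?_) hi
    have h1 := iv_card_le (m n) (a * d n) ((2 + a) * d n)
    have h2 : (2 + a) * d n - a * d n = 2 * d n := by rw [← Nat.sub_mul]; congr 1; omega
    rw [h2] at h1
    have h3 := hX n
    rcases hd n with h | h
    · left
      rw [← Finset.card_eq_zero]
      omega
    · right
      exact ⟨by omega, by omega⟩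
  induction j with
  | zero =>
    obtain ⟨i, h⟩ := mv 0
    exact ⟨i, by simpa using h⟩
  | succ j ih =>
    obtain ⟨i₁, h1⟩ := ih
    obtain ⟨i₂, h2⟩ := mv (j + 1)
    refine ⟨max i₁ i₂, ?_⟩
    have h3 := aux_union_group (H (max i₁ i₂)) _ _ (h1.trans (hH (le_max_left _ _)))
      (h2.trans (hH (le_max_right _ _))) ?_
    · refine le_trans (SG_mono fun n x hx => ?_) h3
      simp only [Finset.mem_union, mem_iv] at hx ⊢
      have e1 : (2 + (j + 1)) * d n = j * d n + 3 * d n := by ring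
      have e2 : (2 + j) * d n = j * d n + 2 * d n := by ring
      have e3 : (j + 1) * d n = j * d n + d n := by ring
      rw [e1] at hx ⊢
      rw [e2, e3]
      omega
    · intro n
      have e1 : (2 + (j + 1)) * d n = j * d n + 3 * d n := by ring
      have e2 : (2 + j) * d n = j * d n + 2 * d n := by ring
      have e3 : (j + 1) * d n = j * d n + d n := by ring
      rw [e1, e2, e3]
      have key : j * d n + 2 * d n ≤ m n → (iv (m n) 0 (j * d n + 2 * d n) ∩
          iv (m n) (j * d n + d n) (j * d n + 3 * d n)).card = d n := by
        intro hle
        have : iv (m n) 0 (j * d n + 2 * d n) ∩ iv (m n) (j * d n + d n) (j * d n + 3 * d n) =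
          iv (m n) (j * d n + d n) (j * d n + 2 * d n) := by
          ext x
          simp only [Finset.mem_inter, mem_iv]
          omega
        rw [this, iv_card _ _ _ hle]
        omega
      by_cases hle : j * d n + 2 * d n ≤ m n
      · rw [key hle]
        rcases hd n with h | h
        · left
          intro x
          simp only [mem_iv, h]
          omega
        · right
          refine ⟨h, ?_⟩
          have : iv (m n) (j * d n + d n) (j * d n + 3 * d n) \ iv (m n) 0 (j * d n + 2 * d n) ⊆
              iv (m n) (j * d n + 2 * d n) (j * d n + 3 * d n) := by
            intro x
            simp only [Finset.mem_sdiff, mem_iv]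
            omega
          refine (Finset.card_le_card this).trans ((iv_card_le _ _ _).trans ?_)
          omega
      · left
        intro x
        simp only [mem_iv]
        have := x.2
        omega

theorem aux_large {m : ℕ → ℕ} (H : ℕ → Subgroup (PG m)) (hH : Monotone H)
    (hU : ∀ g, ∃ t, g ∈ H t) : ∃ M i, SG (fun n => if m n ≤ M then ∅ else Finset.univ) ≤ H i := by
  set q : ℕ → ℕ → ℕ := fun k n => m n / 2 ^ (k + 1) with hq
  have hq2 : ∀ k l n, k < l → 2 * q l n ≤ q k n := by
    intro k l n hkl
    have h1 : 2 * q l n ≤ m n / 2 ^ l := by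
      simp only [hq]
      rw [pow_succ, ← Nat.div_div_eq_div_mul]
      omega
    exact h1.trans (Nat.div_le_div_left (Nat.pow_le_pow_right (by norm_num) hkl) (by positivity))
  have main : ∀ k, (∃ i, SG (fun n => iv (m n) (q k n) (2 * q k n - 2)) ≤ H i) →
      ∃ M i, SG (fun n => if m n ≤ M then ∅ else Finset.univ) ≤ H i := by
    intro k hk
    set d : ℕ → ℕ := fun n => if q k n < 6 then 0 else (q k n - 2) / 2 with hd
    have hqm : ∀ n, 2 * q k n ≤ m n := by
      intro n
      simp only [hq]
      rw [pow_succ, ← Nat.div_div_eq_div_mul]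
      have := Nat.div_le_self (m n) (2 ^ k)
      omega
    obtain ⟨i, hi⟩ := aux_grow H hH hU _ d (fun n => by simp only [hd]; split_ifs <;> omega)
      (fun n => by
        rw [iv_card _ _ _ (by have := hqm n; omega)]
        simp only [hd]; split_ifs <;> omega) hk (2 ^ (k + 3))
    refine ⟨6 * 2 ^ (k + 1), i, le_trans (SG_mono fun n x hx => ?_) hi⟩
    split_ifs at hx with hm
    · simp at hx
    · rw [mem_iv]
      refine ⟨Nat.zero_le _, x.2.trans_le ?_⟩
      have h6 : 6 ≤ q k n := by
        simp only [hq]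
        rw [Nat.le_div_iff_mul_le (by positivity)]
        omega
      have hlt : m n < 2 ^ (k + 1) * (q k n + 1) := by
        simp only [hq]
        exact Nat.lt_mul_div_succ _ (by positivity)
      have hdn : q k n + 1 ≤ 4 * d n := by
        simp only [hd]
        split_ifs <;> omega
      calc m n ≤ 2 ^ (k + 1) * (q k n + 1) := hlt.le
        _ ≤ 2 ^ (k + 1) * (4 * d n) := Nat.mul_le_mul_left _ hdn
        _ = 2 ^ (k + 3) * d n := by ring
        _ ≤ _ := Nat.mul_le_mul_right _ (by omega)
  obtain ⟨k, hk⟩ : ∃ k i, SG ((fun k n => iv (m n) (q k n) (2 * q k n - 2)) k) ≤ H i := by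
    refine aux_key H hH hU (fun k n => iv (m n) (q k n) (2 * q k n))
      (fun k n => iv (m n) (q k n) (2 * q k n - 2)) ?_ ?_ ?_
    · intro i j hij n
      rw [Finset.disjoint_left]
      intro x
      simp only [mem_iv]
      rcases lt_or_gt_of_ne hij with h | h
      · have := hq2 i j n h
        omega
      · have := hq2 j i n h
        omega
    · intro n
      refine ⟨m n, fun k hk => ?_⟩
      have : q k n = 0 := by
        simp only [hq]
        apply Nat.div_eq_of_lt
        calc m n < 2 ^ m n := Nat.lt_two_pow_self
          _ ≤ 2 ^ (k + 1) := Nat.pow_le_pow_right (by norm_num) (by omega)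
      ext x
      simp [mem_iv, this]
    · intro k n
      have hqm : 2 * q k n ≤ m n := by
        simp only [hq]
        rw [pow_succ, ← Nat.div_div_eq_div_mul]
        have := Nat.div_le_self (m n) (2 ^ k)
        omega
      by_cases h : q k n ≤ 2
      · left
        ext x
        simp only [mem_iv, Finset.notMem_empty, iff_false]
        omega
      · right
        refine ⟨fun x => ?_, ⟨2 * q k n - 2, by omega⟩, ⟨2 * q k n - 1, by omega⟩, ?_, ?_, ?_, ?_, ?_⟩
        · simp only [mem_iv]; omega
        · simp only [ne_eq, Fin.mk.injEq]; omega
        all_goals simp only [mem_iv]; omega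
  exact main k hk

/-! ### The bounded part -/

def FG {m : ℕ → ℕ} (F : Set ℕ) : Subgroup (PG m) where
  carrier := {g | ∀ n, n ∉ F → g n = 1}
  one_mem' := by intro n _; rfl
  mul_mem' := by
    intro a b ha hb n hn
    rw [Pi.mul_apply, ha n hn, hb n hn, mul_one]
  inv_mem' := by
    intro a ha n hn
    rw [Pi.inv_apply, ha n hn, inv_one]

theorem FG_mono {m : ℕ → ℕ} {F F' : Set ℕ} (h : F ⊆ F') : (FG F : Subgroup (PG m)) ≤ FG F' :=
  fun _ hg n hn => hg n (fun hh => hn (h hh))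

open Classical in
noncomputable def resG {m : ℕ → ℕ} (F : Set ℕ) (g : PG m) : PG m :=
  fun n => if n ∈ F then g n else 1

theorem resG_mem {m : ℕ → ℕ} (F : Set ℕ) (g : PG m) : resG F g ∈ (FG F : Subgroup (PG m)) := by
  intro n hn
  simp [resG, hn]

theorem resG_of_mem {m : ℕ → ℕ} (F : Set ℕ) (g : PG m) (hg : g ∈ (FG F : Subgroup (PG m))) :
    resG F g = g := by
  funext n
  by_cases hn : n ∈ F
  · simp [resG, hn]
  · simp [resG, hn, hg n hn]

theorem resG_split {m : ℕ → ℕ} (F E : Set ℕ) (g : PG m) :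
    resG F g = resG (F ∩ E) g * resG (F \ E) g := by
  funext n
  by_cases hn : n ∈ F <;> by_cases hn' : n ∈ E <;> simp [resG, hn, hn']

theorem FG_union {m : ℕ → ℕ} (K : Subgroup (PG m)) (F F' : Set ℕ) (h : FG F ≤ K) (h' : FG F' ≤ K) :
    FG (F ∪ F') ≤ K := by
  intro g hg
  rw [← resG_of_mem _ g hg, resG_split _ F]
  refine mul_mem (h (FG_mono ?_ (resG_mem _ _))) (h' (FG_mono ?_ (resG_mem _ _)))
  · exact Set.inter_subset_right
  · rintro x ⟨h1 | h1, h2⟩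
    · exact absurd h1 h2
    · exact h1

theorem aux_patch {m : ℕ → ℕ} {S : Type*} [Finite S] (K : Subgroup (PG m)) (g : PG m)
    (E : S → Set ℕ) (hE : ∀ s, ∀ F' ⊆ E s, resG F' g ∈ K) (F : Set ℕ) (hF : ∀ n ∈ F, ∃ s, n ∈ E s) :
    resG F g ∈ K := by
  classical
  have : Fintype S := Fintype.ofFinite S
  have key : ∀ T : Finset S, ∀ F' : Set ℕ, (∀ n ∈ F', ∃ s ∈ T, n ∈ E s) → resG F' g ∈ K := by
    intro T
    induction T using Finset.induction_on with
    | empty =>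
      intro F' hF'
      have : resG F' g = 1 := by
        funext n
        have : n ∉ F' := fun h => by simpa using hF' n h
        simp [resG, this]
      rw [this]
      exact one_mem K
    | insert s T hs ih =>
      intro F' hF'
      rw [resG_split F' (E s)]
      refine mul_mem (hE s _ Set.inter_subset_right) (ih _ ?_)
      rintro n ⟨h1, h2⟩
      obtain ⟨s', hs', hn⟩ := hF' n h1
      rcases Finset.mem_insert.1 hs' with rfl | h
      · exact absurd hn h2
      · exact ⟨s', h, hn⟩
  exact key Finset.univ F (fun n hn => by obtain ⟨s, hs⟩ := hF n hn; exact ⟨s, by simp, hs⟩)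

abbrev SS (M : ℕ) : Type := ∀ v : Set.Icc 5 M, ↥(alternatingGroup (Fin v.1))

theorem SS_perfect (M : ℕ) : commutator (SS M) = ⊤ := by
  have h := Subgroup.commutator_pi_pi_of_finite
    (Gs := fun v : Set.Icc 5 M => ↥(alternatingGroup (Fin v.1)))
    (fun v => (⊤ : Subgroup ↥(alternatingGroup (Fin v.1))))
    (fun v => (⊤ : Subgroup ↥(alternatingGroup (Fin v.1))))
  have e : (fun v : Set.Icc 5 M => ⁅(⊤ : Subgroup ↥(alternatingGroup (Fin v.1))),
      (⊤ : Subgroup ↥(alternatingGroup (Fin v.1)))⁆) =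
      fun v : Set.Icc 5 M => (⊤ : Subgroup ↥(alternatingGroup (Fin v.1))) := by
    funext v
    rw [← commutator_def]
    exact commutator_alternatingGroup_eq_top (by simpa using v.2.1)
  rw [e] at h
  have ht : Subgroup.pi Set.univ
      (fun v : Set.Icc 5 M => (⊤ : Subgroup ↥(alternatingGroup (Fin v.1)))) = ⊤ := by
    rw [eq_top_iff]
    intro x _ v _
    trivial
  rw [ht] at h
  rw [commutator_def]
  exact h

open Classical in
noncomputable def gam {m : ℕ → ℕ} {M : ℕ} (s : SS M) (F : Set ℕ) : PG m :=
  fun n => if h : n ∈ F ∧ m n ∈ Set.Icc 5 M then s ⟨m n, h.2⟩ else 1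

theorem gam_mul {m : ℕ → ℕ} {M : ℕ} (s s' : SS M) (F : Set ℕ) :
    (gam (s * s') F : PG m) = gam s F * gam s' F := by
  funext n
  by_cases h : n ∈ F ∧ m n ∈ Set.Icc 5 M
  · simp only [gam, Pi.mul_apply, dif_pos h]
  · simp only [gam, Pi.mul_apply, dif_neg h, mul_one]

theorem gam_one {m : ℕ → ℕ} {M : ℕ} (F : Set ℕ) : (gam (1 : SS M) F : PG m) = 1 := by
  funext n
  by_cases h : n ∈ F ∧ m n ∈ Set.Icc 5 M
  · simp only [gam, Pi.one_apply, dif_pos h]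
  · simp only [gam, Pi.one_apply, dif_neg h]

theorem gam_inv {m : ℕ → ℕ} {M : ℕ} (s : SS M) (F : Set ℕ) :
    (gam s⁻¹ F : PG m) = (gam s F)⁻¹ := by
  rw [eq_inv_iff_mul_eq_one, ← gam_mul, inv_mul_cancel, gam_one]

theorem gam_mem {m : ℕ → ℕ} {M : ℕ} (s : SS M) (F : Set ℕ) :
    (gam s F : PG m) ∈ (FG F : Subgroup (PG m)) := by
  intro n hn
  have h : ¬ (n ∈ F ∧ m n ∈ Set.Icc 5 M) := fun h => hn h.1
  simp only [gam, dif_neg h]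

theorem gam_comm {m : ℕ → ℕ} {M : ℕ} (s s' : SS M) (F F' : Set ℕ) (hF : F' ⊆ F) :
    (gam (s * s' * s⁻¹ * s'⁻¹) F' : PG m) = gam s F' * gam s' F * (gam s F')⁻¹ * (gam s' F)⁻¹ := by
  rw [← gam_inv, ← gam_inv]
  funext n
  by_cases h : n ∈ F' ∧ m n ∈ Set.Icc 5 M
  · have h' : n ∈ F ∧ m n ∈ Set.Icc 5 M := ⟨hF h.1, h.2⟩
    simp only [gam, Pi.mul_apply, dif_pos h, dif_pos h']
  · by_cases h' : n ∈ F ∧ m n ∈ Set.Icc 5 M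
    · simp only [gam, Pi.mul_apply, dif_neg h, dif_pos h', one_mul, Pi.inv_apply, mul_one,
        mul_inv_cancel]
    · simp only [gam, Pi.mul_apply, dif_neg h, dif_neg h', mul_one]

theorem gam_exists {m : ℕ → ℕ} (hm : ∀ n, 5 ≤ m n) {M : ℕ} (F : Set ℕ) (hF : ∀ n ∈ F, m n ≤ M)
    (g : PG m) (n : ℕ) (hn : n ∈ F) : ∃ s : SS M, g n = (gam s F : PG m) n := by
  classical
  have h : n ∈ F ∧ m n ∈ Set.Icc 5 M := ⟨hn, hm n, hF n hn⟩
  refine ⟨Function.update 1 ⟨m n, h.2⟩ (g n), ?_⟩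
  simp only [gam, dif_pos h, Function.update_self]

theorem gam_bound {m : ℕ → ℕ} {M : ℕ} (H : ℕ → Subgroup (PG m)) (hH : Monotone H)
    (hU : ∀ g, ∃ t, g ∈ H t) (F : Set ℕ) : ∃ t, ∀ s : SS M, gam s F ∈ H t := by
  choose t ht using fun s : SS M => hU (gam s F)
  obtain ⟨b, hb⟩ := (Set.finite_range t).bddAbove
  exact ⟨b, fun s => hH (hb ⟨s, rfl⟩) (ht s)⟩

theorem b_key {m : ℕ → ℕ} (hm : ∀ n, 5 ≤ m n) (H : ℕ → Subgroup (PG m)) (hH : Monotone H)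
    (hU : ∀ g, ∃ t, g ∈ H t) (M : ℕ) (F : ℕ → Set ℕ) (hF : ∀ k, ∀ n ∈ F k, m n ≤ M)
    (hd : ∀ i j, i ≠ j → ∀ n, n ∈ F i → n ∉ F j) : ∃ k i, FG (F k) ≤ H i := by
  classical
  choose f hf using fun k => gam_bound (M := M) H hH hU (F k)
  set A : ℕ → ∀ n, Finset (Fin (m n)) := fun k n => if n ∈ F k then Finset.univ else ∅ with hA
  have hFA : ∀ k, (FG (F k) : Subgroup (PG m)) ≤ SG (A k) := by
    intro k g hg n x hx
    have hn : n ∉ F k := by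
      intro h
      simp [hA, h] at hx
    rw [hg n hn]
    rfl
  obtain ⟨k, hk⟩ := aux_induce H hH hU A (by
      intro i j hij n
      simp only [hA]
      by_cases h : n ∈ F i
      · simp [hd i j hij n h]
      · simp [h]) (by
      intro n
      by_cases h : ∃ k, n ∈ F k
      · obtain ⟨k, hk⟩ := h
        refine ⟨k + 1, fun j hj => ?_⟩
        simp [hA, hd k j (by omega) n hk]
      · push Not at h
        exact ⟨0, fun j _ => by simp [hA, h j]⟩) (fun k => max k (f k)) (fun k => le_max_left _ _)
  refine ⟨k, max k (f k), ?_⟩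
  set K := H (max k (f k)) with hK
  have hγ : ∀ s : SS M, gam s (F k) ∈ K := fun s => hH (le_max_right _ _) (hf k s)
  let T : Subgroup (SS M) :=
    { carrier := {s | ∀ F' ⊆ F k, (gam s F' : PG m) ∈ K}
      one_mem' := by
        intro F' _
        rw [gam_one]
        exact one_mem K
      mul_mem' := by
        intro a b ha hb F' hF'
        rw [gam_mul]
        exact mul_mem (ha F' hF') (hb F' hF')
      inv_mem' := by
        intro a ha F' hF'
        rw [gam_inv]
        exact inv_mem (ha F' hF') }
  have hT : T = ⊤ := by
    rw [eq_top_iff, ← SS_perfect, commutator_def, Subgroup.commutator_le]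
    intro s _ s' _ F' hF'
    change (gam (s * s' * s⁻¹ * s'⁻¹) F' : PG m) ∈ K
    rw [gam_comm s s' (F k) F' hF']
    have h1 : (gam s F' : PG m) ∈ SG (A k) := hFA k (FG_mono hF' (gam_mem s F'))
    have h2 : (gam s' (F k) : PG m) ∈ SG (A k) := hFA k (gam_mem s' (F k))
    obtain ⟨h, hh, hh'⟩ := hk _ h1
    rw [← aux_conj (A k) h _ _ h1 h2 hh']
    exact mul_mem (mul_mem (mul_mem hh (hγ s')) (inv_mem hh)) (inv_mem (hγ s'))
  intro g hg
  rw [← resG_of_mem _ g hg]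
  refine aux_patch (S := SS M) K g (fun s => {n | n ∈ F k ∧ g n = (gam s (F k) : PG m) n}) ?_ _ ?_
  · intro s F' hF'
    have hs : s ∈ T := by rw [hT]; trivial
    have hF'k : F' ⊆ F k := fun n hn => (hF' hn).1
    have : resG F' g = gam s F' := by
      funext n
      by_cases hn : n ∈ F'
      · simp only [resG, if_pos hn]
        rw [(hF' hn).2]
        simp [gam, hn, hF'k hn]
      · simp [resG, hn, gam]
    rw [this]
    exact hs F' hF'k
  · intro n hn
    obtain ⟨s, hs⟩ := gam_exists hm (F k) (hF k) g n hn
    exact ⟨s, hn, hs⟩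

theorem b_ultra {m : ℕ → ℕ} (hm : ∀ n, 5 ≤ m n) (H : ℕ → Subgroup (PG m)) (hH : Monotone H)
    (hU : ∀ g, ∃ t, g ∈ H t) (M : ℕ) (F₀ : Set ℕ) (hF : ∀ n ∈ F₀, m n ≤ M)
    (hbad : ¬ ∃ i, FG F₀ ≤ H i) :
    ∃ F ⊆ F₀, (¬ ∃ i, FG F ≤ H i) ∧ ∀ F' ⊆ F, (∃ i, FG F' ≤ H i) ∨ ∃ i, FG (F \ F') ≤ H i := by
  by_contra hcon
  have hstep : ∀ B : {B : Set ℕ // B ⊆ F₀ ∧ ¬ ∃ i, FG B ≤ H i},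
      ∃ B' : {B : Set ℕ // B ⊆ F₀ ∧ ¬ ∃ i, FG B ≤ H i}, B'.1 ⊆ B.1 ∧
        ¬ ∃ i, FG (B.1 \ B'.1) ≤ H i := by
    intro B
    by_contra h
    apply hcon
    refine ⟨B.1, B.2.1, B.2.2, fun F' hF' => ?_⟩
    by_contra h'
    rw [not_or] at h'
    exact h ⟨⟨F', hF'.trans B.2.1, h'.1⟩, hF', h'.2⟩
  choose nx hnx1 hnx2 using hstep
  let B : ℕ → {B : Set ℕ // B ⊆ F₀ ∧ ¬ ∃ i, FG B ≤ H i} :=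
    fun k => Nat.rec ⟨F₀, le_rfl, hbad⟩ (fun _ b => nx b) k
  have hBs : ∀ k, B (k + 1) = nx (B k) := fun k => rfl
  have hanti : Antitone fun k => (B k).1 :=
    antitone_nat_of_succ_le fun k => by rw [hBs]; exact hnx1 _
  have hdis : ∀ i j, i < j → ∀ n, n ∈ (B i).1 \ (B (i + 1)).1 → n ∉ (B j).1 \ (B (j + 1)).1 :=
    fun i j hij n hn hn' => hn.2 (hanti (show i + 1 ≤ j from hij) hn'.1)
  obtain ⟨k, hk⟩ := b_key hm H hH hU M (fun k => (B k).1 \ (B (k + 1)).1)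
    (fun k n hn => hF n ((B k).2.1 hn.1)) (by
      intro i j hij n hn hn'
      rcases lt_or_gt_of_ne hij with h | h
      · exact hdis i j h n hn hn'
      · exact hdis j i h n hn' hn)
  exact hnx2 (B k) hk

theorem b_stab {m : ℕ → ℕ} (H : ℕ → Subgroup (PG m)) (hH : Monotone H) (F : Set ℕ)
    (hF : ∀ F' ⊆ F, (∃ i, FG F' ≤ H i) ∨ ∃ i, FG (F \ F') ≤ H i) :
    ∃ i, ∀ F' ⊆ F, (∃ j, FG F' ≤ H j) → FG F' ≤ H i := by
  by_contra! hcon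
  have hstep : ∀ (k : ℕ) (C : {C : Set ℕ // C ⊆ F ∧ ∃ i, FG C ≤ H i}),
      ∃ C' : {C : Set ℕ // C ⊆ F ∧ ∃ i, FG C ≤ H i}, C.1 ⊆ C'.1 ∧ ¬ FG (C'.1 \ C.1) ≤ H k := by
    intro k C
    obtain ⟨j, hj⟩ := C.2.2
    obtain ⟨A, hA, ⟨j', hj'⟩, hAn⟩ := hcon (max j k)
    refine ⟨⟨C.1 ∪ A, Set.union_subset C.2.1 hA, max j j',
      FG_union _ _ _ (hj.trans (hH (le_max_left _ _))) (hj'.trans (hH (le_max_right _ _)))⟩,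
      Set.subset_union_left, fun h => hAn ?_⟩
    refine le_trans (FG_mono ?_) (FG_union (H (max j k)) _ _ (hj.trans (hH (le_max_left _ _)))
      (h.trans (hH (le_max_right _ _))))
    intro x hx
    by_cases hxC : x ∈ C.1
    · exact Or.inl hxC
    · exact Or.inr ⟨Or.inr hx, hxC⟩
  choose nx hnx1 hnx2 using hstep
  let C : ℕ → {C : Set ℕ // C ⊆ F ∧ ∃ i, FG C ≤ H i} :=
    fun k => Nat.rec ⟨∅, Set.empty_subset _, 0, fun g hg => by
      have : g = 1 := funext fun n => hg n (by simp)
      rw [this]; exact one_mem _⟩ (fun k c => nx k c) k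
  have hCs : ∀ k, C (k + 1) = nx k (C k) := fun k => rfl
  have hmono : Monotone fun k => (C k).1 :=
    monotone_nat_of_le_succ fun k => by rw [hCs]; exact hnx1 _ _
  set D : ℕ → Set ℕ := fun k => (C (k + 1)).1 \ (C k).1 with hD
  have hDn : ∀ k, ¬ FG (D k) ≤ H k := fun k => hnx2 k (C k)
  have hdis : ∀ i j, i < j → ∀ n, n ∈ D i → n ∉ D j :=
    fun i j hij n hn hn' => hn'.2 (hmono (show i + 1 ≤ j from hij) hn.1)
  rcases hF (⋃ k, D (2 * k)) (Set.iUnion_subset fun k x hx => (C (2 * k + 1)).2.1 hx.1) with ⟨i, hi⟩ | ⟨i, hi⟩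
  · apply hDn (2 * i)
    exact le_trans (FG_mono (Set.subset_iUnion (fun k => D (2 * k)) i))
      (hi.trans (hH (by omega)))
  · apply hDn (2 * i + 1)
    refine le_trans (FG_mono ?_) (hi.trans (hH (by omega)))
    intro x hx
    refine ⟨(C (2 * i + 1 + 1)).2.1 hx.1, fun h => ?_⟩
    obtain ⟨k, hk⟩ := Set.mem_iUnion.1 h
    rcases lt_or_ge (2 * k) (2 * i + 1) with h' | h'
    · exact hdis _ _ h' x hk hx
    · exact hdis _ _ (by omega) x hx hk

theorem b_main {m : ℕ → ℕ} (hm : ∀ n, 5 ≤ m n) (H : ℕ → Subgroup (PG m)) (hH : Monotone H)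
    (hU : ∀ g, ∃ t, g ∈ H t) (M : ℕ) (F₀ : Set ℕ) (hF₀ : ∀ n ∈ F₀, m n ≤ M) :
    ∃ i, FG F₀ ≤ H i := by
  classical
  by_contra hbad
  obtain ⟨F, hFF, hFbad, hult⟩ := b_ultra hm H hH hU M F₀ hF₀ hbad
  have hF : ∀ n ∈ F, m n ≤ M := fun n hn => hF₀ n (hFF hn)
  obtain ⟨i, hi⟩ := b_stab H hH F hult
  obtain ⟨j, hj⟩ := gam_bound (M := M) H hH hU F
  apply hFbad
  refine ⟨max i j, fun g hg => ?_⟩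
  obtain ⟨s, hs⟩ : ∃ s : SS M, ∃ k, FG (F \ {n | n ∈ F ∧ g n = (gam s F : PG m) n}) ≤ H k := by
    by_contra! hno
    apply hFbad
    refine ⟨i, fun g' hg' => ?_⟩
    rw [← resG_of_mem _ g' hg']
    refine aux_patch (S := SS M) (H i) g' (fun s => {n | n ∈ F ∧ g n = (gam s F : PG m) n}) ?_ _ ?_
    · intro s F' hF'
      have hsub : {n | n ∈ F ∧ g n = (gam s F : PG m) n} ⊆ F := fun n hn => hn.1
      rcases hult _ hsub with h | ⟨k, hk⟩
      · exact hi _ hsub h (FG_mono hF' (resG_mem _ _))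
      · exact absurd hk (hno s k)
    · intro n hn
      obtain ⟨s, hs⟩ := gam_exists hm F hF g n hn
      exact ⟨s, hn, hs⟩
  have h1 := hi _ Set.sdiff_subset hs
  have h2 : (gam s F)⁻¹ * g ∈ H i := by
    apply h1
    intro n hn
    by_cases hnF : n ∈ F
    · have : g n = (gam s F : PG m) n := by
        by_contra hne
        exact hn ⟨hnF, fun h => hne h.2⟩
      simp [this]
    · rw [Pi.mul_apply, Pi.inv_apply, gam_mem s F n hnF, hg n hnF]
      simp
  have e : g = gam s F * ((gam s F)⁻¹ * g) := by group
  rw [e]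
  exact mul_mem (hH (le_max_right _ _) (hj s)) (hH (le_max_left _ _) h2)

/-- If `mₙ ≥ 5` for all `n`, then the full direct product `∏ n, Alt(mₙ)` cannot be
written as the union of a countable increasing chain of proper subgroups. -/
theorem stmt_4 (m : ℕ → ℕ) (hm : ∀ n, 5 ≤ m n) :
    ¬ ∃ H : ℕ → Subgroup (∀ n, ↥(alternatingGroup (Fin (m n)))),
        Monotone H ∧ (∀ t, H t ≠ ⊤) ∧
          ∀ g : ∀ n, ↥(alternatingGroup (Fin (m n))), ∃ t, g ∈ H t := by
  rintro ⟨H, hH, hne, hU⟩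
  obtain ⟨M, i, hi⟩ := aux_large H hH hU
  obtain ⟨j, hj⟩ := b_main hm H hH hU M {n | m n ≤ M} (fun n hn => hn)
  apply hne (max i j)
  have h1 : FG {n | m n ≤ M}ᶜ ≤ H (max i j) := by
    refine le_trans ?_ (hi.trans (hH (le_max_left _ _)))
    intro g hg n x hx
    have hn : n ∉ {n | m n ≤ M}ᶜ := by
      intro h
      have h' : ¬ m n ≤ M := h
      simp [h'] at hx
    rw [hg n hn]
    rfl
  have h2 := FG_union (H (max i j)) _ _ (hj.trans (hH (le_max_right _ _))) h1
  rw [eq_top_iff]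
  intro g _
  apply h2
  intro n hn
  rw [Set.union_compl_self] at hn
  exact absurd (Set.mem_univ n) hn
end

section
/- Let m = 4n for some n ≥ 2, and let C be the set of all fixed-point-free involutions of {1, …, m} (equivalently, the permutations that are products of 2n disjoint transpositions; these are even, and C is a single conjugacy class of Alt(m)). Then for every φ ∈ Alt(m) there exist π_1, π_2, π_3, π_4 ∈ C such that φ = π_1 π_2 π_3 π_4. -/
namespace FourInv

open Equiv Equiv.Perm

set_option linter.unusedSectionVars false

variable {X : Type*} [DecidableEq X]

/-- `π` is an involution moving exactly the points of `S`. -/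
def IsInv (S : Set X) (π : Perm X) : Prop := π * π = 1 ∧ ∀ x, π x ≠ x ↔ x ∈ S

/-- `φ` is a product of four involutions moving exactly `S`, the first one being `π₁`. -/
def FF (S : Set X) (φ π₁ : Perm X) : Prop :=
  ∃ π₂ π₃ π₄, IsInv S π₁ ∧ IsInv S π₂ ∧ IsInv S π₃ ∧ IsInv S π₄ ∧ φ = π₁ * π₂ * π₃ * π₄

/-- product of the cycles of a list -/
def pr (L : List (List X)) : Perm X := (L.map List.formPerm).prod

/-- four-involution property for a list of cycles -/
def P (L : List (List X)) (π₁ : Perm X) : Prop := FF {x | x ∈ L.flatten} (pr L) π₁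

theorem IsInv.disj {S T : Set X} {π ρ : Perm X} (h : IsInv S π) (k : IsInv T ρ)
    (d : ∀ x, x ∈ S → x ∉ T) : π.Disjoint ρ := by
  intro x
  have h1 := h.2 x
  have h2 := k.2 x
  have h3 := d x
  tauto

theorem IsInv.mul {S T : Set X} {π ρ : Perm X} (h : IsInv S π) (k : IsInv T ρ)
    (d : ∀ x, x ∈ S → x ∉ T) : IsInv (S ∪ T) (π * ρ) := by
  have hd := h.disj k d
  have hc : π * ρ = ρ * π := hd.commute
  refine ⟨?_, ?_⟩
  · calc π * ρ * (π * ρ) = π * (ρ * π) * ρ := by group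
      _ = (π * π) * (ρ * ρ) := by rw [← hc]; group
      _ = 1 := by rw [h.1, k.1, one_mul]
  · intro x
    have h1 := h.2 x
    have h2 := k.2 x
    have h3 := hd.mul_apply_eq_iff (a := x)
    simp only [Set.mem_union, ← h1, ← h2, ne_eq, h3]
    tauto

theorem isInv_swap {p q : X} (h : p ≠ q) : IsInv {p, q} (swap p q) := by
  refine ⟨by simp, fun x => ?_⟩
  simp only [swap_apply_def, Set.mem_insert_iff, Set.mem_singleton_iff]
  grind

theorem FF.insert {S : Set X} {φ π : Perm X} {a b p q : X} (h : FF S φ π) (hab : π a = b)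
    (ha : a ∈ S) (hp : p ∉ S) (hq : q ∉ S) (hpq : p ≠ q) :
    ∃ ρ, FF (S ∪ {p, q}) (swap q a * (swap p b * φ)) ρ ∧ ρ q = b ∧ ρ a = p ∧
      ∀ x, x ≠ a → x ≠ b → x ≠ p → x ≠ q → ρ x = π x := by
  obtain ⟨π₂, π₃, π₄, h1, h2, h3, h4, rfl⟩ := h
  have hne : b ≠ a := hab ▸ (h1.2 a).2 ha
  have hba : π b = a := by
    have := congrArg (fun f => f a) h1.1
    simpa [hab] using this
  have hb : b ∈ S := (h1.2 b).1 (by rw [hba]; exact hne.symm)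
  have hap : a ≠ p := fun h => hp (h ▸ ha)
  have haq : a ≠ q := fun h => hq (h ▸ ha)
  have hbp : b ≠ p := fun h => hp (h ▸ hb)
  have hbq : b ≠ q := fun h => hq (h ▸ hb)
  have hs := isInv_swap hpq
  have hd : ∀ x, x ∈ S → x ∉ ({p, q} : Set X) := by
    rintro x hx (rfl | rfl)
    · exact hp hx
    · exact hq hx
  have e1 := h1.mul hs hd
  have fp : π p = p := by
    have := h1.2 p
    tauto
  have fq : π q = q := by
    have := h1.2 q
    tauto
  set ρ : Perm X := swap q a * (swap p b * (π * swap p q)) with hρ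
  have inv : ∀ x, π (π x) = x := fun x => by
    have := congrArg (fun f => f x) h1.1
    simpa using this
  have rq : ρ q = b := by
    simp [hρ, fp, swap_apply_def, hne, hbq]
  have rp : ρ p = a := by
    simp [hρ, fq, swap_apply_def, hpq.symm, hbq.symm]
  have ra : ρ a = p := by
    simp [hρ, hab, swap_apply_def, hap, haq, hap.symm, hbp, hpq]
  have rb : ρ b = q := by
    simp [hρ, hba, swap_apply_def, hap, hne.symm, hbp, hbq]
  have rx : ∀ x, x ≠ a → x ≠ b → x ≠ p → x ≠ q → ρ x = π x := by
    intro x xa xb xp xq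
    have y1 : π x ≠ a := fun h => xb (by rw [← inv x, h, hab])
    have y2 : π x ≠ b := fun h => xa (by rw [← inv x, h, hba])
    have y3 : π x ≠ p := fun h => xp (by rw [← inv x, h, fp])
    have y4 : π x ≠ q := fun h => xq (by rw [← inv x, h, fq])
    simp [hρ, swap_apply_def, xp, xq, y1, y2, y3, y4]
  refine ⟨ρ, ⟨π₂ * swap p q, π₃ * swap p q, π₄ * swap p q, ⟨?_, ?_⟩, h2.mul hs hd, h3.mul hs hd,
    h4.mul hs hd, ?_⟩, rq, ra, rx⟩
  · ext x
    have y1 : x ≠ b → π x ≠ a := fun xb h => xb (by rw [← inv x, h, hab])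
    have y2 : x ≠ a → π x ≠ b := fun xa h => xa (by rw [← inv x, h, hba])
    have y3 : x ≠ p → π x ≠ p := fun xp h => xp (by rw [← inv x, h, fp])
    have y4 : x ≠ q → π x ≠ q := fun xq h => xq (by rw [← inv x, h, fq])
    simp only [coe_mul, Function.comp_apply, coe_one, id_eq]
    by_cases xa : x = a
    · rw [xa, ra, rp]
    by_cases xb : x = b
    · rw [xb, rb, rq]
    by_cases xp : x = p
    · rw [xp, rp, ra]
    by_cases xq : x = q
    · rw [xq, rq, rb]
    rw [rx x xa xb xp xq, rx _ (y1 xb) (y2 xa) (y3 xp) (y4 xq), inv]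
  · intro x
    have := h1.2 x
    simp only [Set.mem_union, Set.mem_insert_iff, Set.mem_singleton_iff]
    clear_value ρ
    clear hρ hd hs e1 h1 h2 h3 h4
    by_cases xa : x = a
    · subst xa
      simp [ra, ha, hap.symm]
    by_cases xb : x = b
    · subst xb
      simp [rb, hb, hbq.symm]
    by_cases xp : x = p
    · subst xp
      simp [rp, hap]
    by_cases xq : x = q
    · subst xq
      simp [rq, hbq]
    rw [rx x xa xb xp xq]
    simp only [xp, xq, or_false]
    exact this
  · have c3 : swap p q * π₃ = π₃ * swap p q := ((h3.disj hs hd).commute.eq).symm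
    have c2 : swap p q * π₂ = π₂ * swap p q := ((h2.disj hs hd).commute.eq).symm
    have c4 : swap p q * π₄ = π₄ * swap p q := ((h4.disj hs hd).commute.eq).symm
    have ss : swap p q * swap p q = 1 := by simp
    simp only [hρ, mul_assoc]
    congr 3
    rw [← mul_assoc (swap p q) π₂, c2, mul_assoc π₂, ← mul_assoc (swap p q) (swap p q), ss,
      one_mul, ← mul_assoc (swap p q) π₄, c4, mul_assoc π₄, ss, mul_one]

theorem FF.congr {S T : Set X} {φ ψ π : Perm X} (h : FF S φ π) (hS : S = T) (hφ : φ = ψ) :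
    FF T ψ π := by
  subst hS hφ
  exact h

theorem FF.mul {S T : Set X} {φ ψ π ρ : Perm X} (h : FF S φ π) (k : FF T ψ ρ)
    (d : ∀ x, x ∈ S → x ∉ T) : FF (S ∪ T) (φ * ψ) (π * ρ) := by
  obtain ⟨π₂, π₃, π₄, h1, h2, h3, h4, rfl⟩ := h
  obtain ⟨ρ₂, ρ₃, ρ₄, k1, k2, k3, k4, rfl⟩ := k
  refine ⟨π₂ * ρ₂, π₃ * ρ₃, π₄ * ρ₄, h1.mul k1 d, h2.mul k2 d, h3.mul k3 d, h4.mul k4 d, ?_⟩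
  have c2 : Commute π₂ ρ := (h2.disj k1 d).commute
  have c3 : Commute π₃ (ρ * ρ₂) :=
    ((h3.disj k1 d).commute).mul_right (h3.disj k2 d).commute
  have c4 : Commute π₄ (ρ * ρ₂ * ρ₃) :=
    (((h4.disj k1 d).commute).mul_right (h4.disj k2 d).commute).mul_right (h4.disj k3 d).commute
  calc π * π₂ * π₃ * π₄ * (ρ * ρ₂ * ρ₃ * ρ₄)
      = π * π₂ * π₃ * (π₄ * (ρ * ρ₂ * ρ₃)) * ρ₄ := by group
    _ = π * π₂ * (π₃ * (ρ * ρ₂)) * ρ₃ * π₄ * ρ₄ := by rw [c4.eq]; group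
    _ = π * (π₂ * ρ) * ρ₂ * π₃ * ρ₃ * π₄ * ρ₄ := by rw [c3.eq]; group
    _ = π * ρ * (π₂ * ρ₂) * (π₃ * ρ₃) * (π₄ * ρ₄) := by rw [c2.eq]; group

theorem pr_cons (l : List X) (L : List (List X)) : pr (l :: L) = l.formPerm * pr L := by
  simp [pr]

theorem pr_append (L M : List (List X)) : pr (L ++ M) = pr L * pr M := by
  simp [pr]

theorem P.append {L M : List (List X)} (h : ∃ π, P L π) (k : ∃ π, P M π)
    (d : (L ++ M).flatten.Nodup) : ∃ π, P (L ++ M) π := by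
  obtain ⟨π, h⟩ := h
  obtain ⟨ρ, k⟩ := k
  refine ⟨π * ρ, FF.congr (FF.mul h k ?_) ?_ (pr_append L M).symm⟩
  · intro x h1 h2
    rw [List.flatten_append, List.nodup_append] at d
    exact d.2.2 x h1 x h2 rfl
  · ext x
    simp only [List.flatten_append, List.mem_append, Set.mem_union, Set.mem_ofPred_eq]

theorem disj_formPerm {l m : List X} (h : List.Disjoint l m) :
    Commute l.formPerm m.formPerm := by
  apply Equiv.Perm.Disjoint.commute
  intro x
  by_cases hx : x ∈ l
  · exact Or.inr (List.formPerm_apply_of_notMem (h hx))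
  · exact Or.inl (List.formPerm_apply_of_notMem hx)

theorem P.perm {L M : List (List X)} (h : ∃ π, P L π) (d : L.flatten.Nodup) (e : L.Perm M) :
    ∃ π, P M π := by
  obtain ⟨π, h⟩ := h
  refine ⟨π, FF.congr h ?_ ?_⟩
  · ext x
    exact e.flatten.mem_iff
  · unfold pr
    apply (e.map List.formPerm).prod_eq'
    rw [List.pairwise_map]
    exact (List.nodup_flatten.1 d).2.imp disj_formPerm

theorem commute_swap_formPerm {l : List X} {p q : X} (hp : p ∉ l) (hq : q ∉ l) :
    Commute (swap p q) l.formPerm := by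
  apply Equiv.Perm.Disjoint.commute
  intro x
  by_cases hx : x ∈ l
  · exact Or.inl (swap_apply_of_ne_of_ne (fun h => hp (h ▸ hx)) (fun h => hq (h ▸ hx)))
  · exact Or.inr (List.formPerm_apply_of_notMem hx)

/-- every two lists of lengths `i`, `j` (with `R`) are good with the heads paired -/
def J (R : List (List X)) (i j : ℕ) : Prop :=
  ∀ a l b m, (a :: l).length = i → (b :: m).length = j →
    ((a :: l) :: (b :: m) :: R).flatten.Nodup →
    ∃ π, P ((a :: l) :: (b :: m) :: R) π ∧ π a = b

/-- as `J`, with a further pair in the second cycle -/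
def K (R : List (List X)) (i j : ℕ) : Prop :=
  ∀ a l x b c y m, (a :: l).length = i → (x :: b :: c :: y :: m).length = j →
    ((a :: l) :: (x :: b :: c :: y :: m) :: R).flatten.Nodup →
    ∃ π, P ((a :: l) :: (x :: b :: c :: y :: m) :: R) π ∧ π a = b ∧ π x = y

theorem formPerm_rot (l : List X) (p : X) (h : (p :: l).Nodup) :
    (l ++ [p]).formPerm = (p :: l).formPerm := by
  have := List.formPerm_rotate_one (p :: l) h
  simpa using this

theorem J.step {R : List (List X)} {i j : ℕ} (h : J R i j) (hi : 1 ≤ i) (hj : 1 ≤ j) :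
    J R (i + 1) (j + 1) := by
  intro q l' b m' hl hm hd
  obtain ⟨a, l, rfl⟩ : ∃ a l, l' = a :: l := by
    cases l' with
    | nil => simp at hl; omega
    | cons a l => exact ⟨a, l, rfl⟩
  obtain ⟨m, p, rfl⟩ : ∃ m p, m' = m ++ [p] := by
    rcases List.eq_nil_or_concat m' with rfl | ⟨m, p, rfl⟩
    · simp at hm; omega
    · exact ⟨m, p, by simp⟩
  have N : (q :: p :: ((a :: l) :: (b :: m) :: R).flatten).Nodup := by
    refine (List.Perm.nodup_iff ?_).1 hd
    rw [List.perm_iff_count]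
    intro z
    simp only [List.flatten_cons, List.count_append, List.count_cons, List.count_nil]
    ring
  have hd' : ((a :: l) :: (b :: m) :: R).flatten.Nodup := N.of_cons.of_cons
  obtain ⟨π, hP, hab⟩ := h a l b m (by simpa using hl) (by simpa using hm) hd'
  have hp : p ∉ ((a :: l) :: (b :: m) :: R).flatten := N.of_cons.notMem
  have hq : q ∉ ((a :: l) :: (b :: m) :: R).flatten := fun h => N.notMem (List.mem_cons_of_mem _ h)
  have hpq : p ≠ q := fun h => N.notMem (by simp [h])
  obtain ⟨ρ, h1, h2, h3, h4⟩ := FF.insert hP hab (by simp) hp hq hpq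
  refine ⟨ρ, FF.congr h1 ?_ ?_, h2⟩
  · ext x
    simp only [Set.mem_union, Set.mem_insert_iff, Set.mem_singleton_iff, Set.mem_ofPred_eq,
      List.flatten_cons, List.mem_append, List.mem_cons, List.not_mem_nil, or_false]
    tauto
  · have hc : Commute (swap p b) (a :: l).formPerm := by
      apply commute_swap_formPerm
      · intro h; apply hp; simp at h ⊢; tauto
      · exact fun h => (List.nodup_append.1 N.of_cons.of_cons).2.2 _ h _ (by simp) rfl
    have hr : (b :: (m ++ [p])).formPerm = (p :: b :: m).formPerm := by
      apply formPerm_rot (b :: m) p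
      refine N.of_cons.sublist (List.Sublist.cons_cons _ ?_)
      simp only [List.flatten_cons]
      exact (List.sublist_append_left _ _).trans (List.sublist_append_right _ _)
    rw [pr_cons, pr_cons, pr_cons, pr_cons, hr, List.formPerm_cons_cons, List.formPerm_cons_cons,
      ← mul_assoc (swap p b), hc.eq]
    simp only [mul_assoc]

theorem K.step {R : List (List X)} {i j : ℕ} (h : K R i j) (hj : 4 ≤ j) :
    K R i (j + 2) := by
  intro a l x b c p m' hl hm hd
  obtain ⟨y, m, q, rfl⟩ : ∃ y m q, m' = y :: m ++ [q] := by
    rcases List.eq_nil_or_concat m' with rfl | ⟨m, q, rfl⟩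
    · simp at hm; omega
    · cases m with
      | nil => simp at hm; omega
      | cons y m => exact ⟨y, m, q, by simp⟩
  have N : (q :: p :: ((a :: l) :: (x :: b :: c :: y :: m) :: R).flatten).Nodup := by
    refine (List.Perm.nodup_iff ?_).1 hd
    rw [List.perm_iff_count]
    intro z
    simp only [List.flatten_cons, List.count_append, List.count_cons, List.count_nil]
    ring
  have hd' : ((a :: l) :: (x :: b :: c :: y :: m) :: R).flatten.Nodup := N.of_cons.of_cons
  obtain ⟨π, hP, hab, hxy⟩ := h a l x b c y m hl (by simp at hm ⊢; omega) hd'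
  have hp : p ∉ ((a :: l) :: (x :: b :: c :: y :: m) :: R).flatten := N.of_cons.notMem
  have hq : q ∉ ((a :: l) :: (x :: b :: c :: y :: m) :: R).flatten := fun h => N.notMem (List.mem_cons_of_mem _ h)
  have hpq : p ≠ q := fun h => N.notMem (by simp [h])
  obtain ⟨ρ, h1, h2, h3, h4⟩ := FF.insert hP hxy (by simp) hp hq hpq
  refine ⟨ρ, FF.congr h1 ?_ ?_, ?_, h3⟩
  · ext z
    simp only [Set.mem_union, Set.mem_insert_iff, Set.mem_singleton_iff, Set.mem_ofPred_eq,
      List.flatten_cons, List.mem_append, List.mem_cons, List.not_mem_nil, or_false]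
    tauto
  · have nd : (q :: x :: b :: c :: p :: y :: m).Nodup := by
      have N2 : (q :: p :: x :: b :: c :: y :: m).Nodup := by
        refine N.sublist (List.Sublist.cons_cons _ (List.Sublist.cons_cons _ ?_))
        simp only [List.flatten_cons]
        exact (List.sublist_append_left _ _).trans (List.sublist_append_right _ _)
      refine (List.Perm.nodup_iff ?_).1 N2
      rw [List.perm_iff_count]
      intro z
      simp only [List.count_cons]
      ring
    have hc : Commute (swap p y) (a :: l).formPerm := by
      apply commute_swap_formPerm
      · intro h; apply hp; simp at h ⊢; tauto
      · exact fun h => (List.nodup_append.1 N.of_cons.of_cons).2.2 _ h _ (by simp) rfl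
    have hc' : Commute (swap q x) (a :: l).formPerm := by
      apply commute_swap_formPerm
      · intro h; apply hq; simp at h ⊢; tauto
      · exact fun h => (List.nodup_append.1 N.of_cons.of_cons).2.2 _ h _ (by simp) rfl
    have hr : (x :: b :: c :: p :: (y :: m ++ [q])).formPerm
        = (q :: x :: b :: c :: p :: y :: m).formPerm :=
      formPerm_rot (x :: b :: c :: p :: y :: m) q nd
    have hr2 : (x :: b :: c :: p :: y :: m).formPerm = (p :: y :: (m ++ [x, b, c])).formPerm := by
      apply List.formPerm_eq_of_isRotated nd.of_cons
      exact ⟨3, by simp [List.rotate_cons_succ]⟩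
    have hr3 : (x :: b :: c :: y :: m).formPerm = (y :: (m ++ [x, b, c])).formPerm := by
      apply List.formPerm_eq_of_isRotated
      · have N1 := N.of_cons.of_cons
        rw [List.flatten_cons, List.flatten_cons] at N1
        exact (N1.sublist (List.sublist_append_right _ _)).sublist (List.sublist_append_left _ _)
      · exact ⟨3, by simp [List.rotate_cons_succ]⟩
    rw [pr_cons, pr_cons, pr_cons, pr_cons, hr, List.formPerm_cons_cons q, hr2,
      List.formPerm_cons_cons p, hr3, ← mul_assoc (swap p y), hc.eq, mul_assoc,
      ← mul_assoc (swap q x), hc'.eq]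
    simp only [mul_assoc]
  · rw [h4 a, hab]
    · rintro rfl
      exact (List.nodup_append.1 N.of_cons.of_cons).2.2 a (by simp) a (by simp) rfl
    · rintro rfl
      exact (List.nodup_append.1 N.of_cons.of_cons).2.2 a (by simp) a (by simp) rfl
    · rintro rfl
      exact hp (by simp)
    · rintro rfl
      exact hq (by simp)

theorem K.toJ {R : List (List X)} {i j : ℕ} (h : K R i j) (hj : 4 ≤ j) : J R i j := by
  intro a l b m' hl hm hd
  obtain ⟨c, y, m, x, rfl⟩ : ∃ c y m x, m' = c :: y :: m ++ [x] := by
    rcases List.eq_nil_or_concat m' with rfl | ⟨m, q, rfl⟩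
    · simp at hm; omega
    · rcases m with _ | ⟨c, _ | ⟨y, m⟩⟩
      · simp at hm; omega
      · simp at hm; omega
      · exact ⟨c, y, m, q, by simp⟩
  obtain ⟨π, hP, hab, hxy⟩ := h a l x b c y m hl (by simp at hm ⊢; omega) (by
    refine (List.Perm.nodup_iff ?_).1 hd
    rw [List.perm_iff_count]
    intro z
    simp only [List.flatten_cons, List.count_append, List.count_cons, List.count_nil]
    ring)
  refine ⟨π, FF.congr hP ?_ ?_, hab⟩
  · ext z
    simp only [Set.mem_union, Set.mem_insert_iff, Set.mem_singleton_iff, Set.mem_ofPred_eq,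
      List.flatten_cons, List.mem_append, List.mem_cons, List.not_mem_nil, or_false]
    tauto
  · have hr : (b :: c :: y :: m ++ [x]).formPerm = (x :: b :: c :: y :: m).formPerm := by
      apply formPerm_rot (b :: c :: y :: m)
      have N1 := hd
      rw [List.flatten_cons, List.flatten_cons] at N1
      refine (List.Perm.nodup_iff ?_).1
        ((N1.sublist (List.sublist_append_right _ _)).sublist (List.sublist_append_left _ _))
      rw [List.perm_iff_count]
      intro z
      simp only [List.count_append, List.count_cons, List.count_nil]
      ring
    simp only [pr_cons]
    rw [← hr]
    rfl

theorem J.steps {R : List (List X)} {i j : ℕ} (h : J R i j) (hi : 1 ≤ i) (hj : 1 ≤ j) (s : ℕ) :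
    J R (i + s) (j + s) := by
  induction s with
  | zero => exact h
  | succ s ih => exact ih.step (by omega) (by omega)

theorem K.steps {R : List (List X)} {i j : ℕ} (h : K R i j) (hj : 4 ≤ j) (t : ℕ) :
    K R i (j + 2 * t) := by
  induction t with
  | zero => exact h
  | succ s ih => exact ih.step (by omega)

theorem via_swap {Y : Type*} [DecidableEq Y] (f : Y ↪ X) (a b : Y) :
    viaEmbeddingHom f (swap a b) = swap (f a) (f b) := by
  ext x
  rw [viaEmbeddingHom_apply]
  by_cases hx : x ∈ Set.range f
  · obtain ⟨y, rfl⟩ := hx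
    rw [viaEmbedding_apply]
    simp only [swap_apply_def, f.injective.eq_iff]
    split_ifs <;> rfl
  · rw [viaEmbedding_apply_of_notMem _ _ _ hx, swap_apply_of_ne_of_ne]
    · rintro rfl; exact hx ⟨a, rfl⟩
    · rintro rfl; exact hx ⟨b, rfl⟩

theorem via_formPerm {Y : Type*} [DecidableEq Y] (f : Y ↪ X) (l : List Y) :
    viaEmbeddingHom f l.formPerm = (l.map f).formPerm := by
  induction l with
  | nil => simp
  | cons a l ih =>
    cases l with
    | nil => simp
    | cons b l =>
      simp only [List.map_cons, List.formPerm_cons_cons, map_mul, via_swap] at ih ⊢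
      rw [ih]

theorem via_pr {Y : Type*} [DecidableEq Y] (f : Y ↪ X) (L : List (List Y)) :
    viaEmbeddingHom f (pr L) = pr (L.map (List.map f)) := by
  induction L with
  | nil => simp [pr]
  | cons l L ih => rw [pr_cons, map_mul, ih, via_formPerm, List.map_cons, pr_cons]

theorem via_isInv {Y : Type*} (f : Y ↪ X) {L : List (List Y)} {π : Perm Y}
    (h : IsInv {x | x ∈ L.flatten} π) :
    IsInv {x | x ∈ (L.map (List.map f)).flatten} (viaEmbeddingHom f π) := by
  refine ⟨by rw [← map_mul, h.1, map_one], fun x => ?_⟩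
  rw [← List.map_flatten, viaEmbeddingHom_apply]
  by_cases hx : x ∈ Set.range f
  · obtain ⟨y, rfl⟩ := hx
    rw [viaEmbedding_apply]
    have := h.2 y
    simp only [ne_eq, f.injective.eq_iff, Set.mem_ofPred_eq, List.mem_map_of_injective f.injective]
    exact this
  · rw [viaEmbedding_apply_of_notMem _ _ _ hx]
    simp only [ne_eq, not_true, Set.mem_ofPred_eq, List.mem_map, false_iff]
    rintro ⟨y, -, rfl⟩
    exact hx ⟨y, rfl⟩

theorem P.via {Y : Type*} [DecidableEq Y] (f : Y ↪ X) {L : List (List Y)} {π : Perm Y}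
    (h : P L π) : P (L.map (List.map f)) (viaEmbeddingHom f π) := by
  obtain ⟨π₂, π₃, π₄, h1, h2, h3, h4, h5⟩ := h
  refine ⟨_, _, _, via_isInv f h1, via_isInv f h2, via_isInv f h3, via_isInv f h4, ?_⟩
  rw [← via_pr, h5]
  simp only [map_mul]

theorem P.base {k : ℕ} {L : List (List (Fin k))} (π₁ π₂ π₃ π₄ : Perm (Fin k))
    (hL : ∀ x, x ∈ L.flatten)
    (h1 : π₁ * π₁ = 1 ∧ ∀ x, π₁ x ≠ x) (h2 : π₂ * π₂ = 1 ∧ ∀ x, π₂ x ≠ x)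
    (h3 : π₃ * π₃ = 1 ∧ ∀ x, π₃ x ≠ x) (h4 : π₄ * π₄ = 1 ∧ ∀ x, π₄ x ≠ x)
    (h : pr L = π₁ * π₂ * π₃ * π₄) : P L π₁ :=
  ⟨π₂, π₃, π₄, ⟨h1.1, fun x => iff_of_true (h1.2 x) (hL x)⟩,
    ⟨h2.1, fun x => iff_of_true (h2.2 x) (hL x)⟩, ⟨h3.1, fun x => iff_of_true (h3.2 x) (hL x)⟩,
    ⟨h4.1, fun x => iff_of_true (h4.2 x) (hL x)⟩, h⟩

/-- the embedding of `Fin k` given by a duplicate-free list -/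
def emb (l : List X) (h : l.Nodup) : Fin l.length ↪ X := ⟨l.get, List.nodup_iff_injective_get.1 h⟩

/-- short name for a list of transpositions -/
def sw {k : ℕ} (l : List (Fin k × Fin k)) : Perm (Fin k) := (l.map fun z => swap z.1 z.2).prod

theorem base11 : P ([[0], [1]] : List (List (Fin 2))) (sw [(0, 1)]) :=
  P.base _ (sw [(0, 1)]) (sw [(0, 1)]) (sw [(0, 1)])
    (by decide) (by decide) (by decide) (by decide) (by decide) (by decide)

theorem base15 : P ([[0], [1, 2, 3, 4, 5]] : List (List (Fin 6))) (sw [(0, 2), (1, 4), (3, 5)]) :=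
  P.base _ (sw [(0, 1), (2, 3), (4, 5)]) (sw [(0, 2), (1, 5), (3, 4)])
    (sw [(0, 4), (1, 5), (2, 3)])
    (by decide) (by decide) (by decide) (by decide) (by decide) (by decide)

theorem base24 : P ([[0, 1], [3, 4, 5, 2]] : List (List (Fin 6))) (sw [(0, 3), (1, 5), (2, 4)]) :=
  P.base _ (sw [(0, 1), (2, 3), (4, 5)]) (sw [(0, 1), (2, 4), (3, 5)])
    (sw [(0, 2), (1, 4), (3, 5)])
    (by decide) (by decide) (by decide) (by decide) (by decide) (by decide)

theorem base1113 : P ([[0], [1], [2], [3, 4, 5]] : List (List (Fin 6)))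
    (sw [(0, 3), (1, 4), (2, 5)]) :=
  P.base _ (sw [(0, 3), (1, 5), (2, 4)]) (sw [(0, 4), (1, 3), (2, 5)])
    (sw [(0, 4), (1, 5), (2, 3)])
    (by decide) (by decide) (by decide) (by decide) (by decide) (by decide)

theorem base2213 : P ([[0, 1], [2, 3], [4], [5, 6, 7]] : List (List (Fin 8)))
    (sw [(0, 2), (1, 4), (3, 5), (6, 7)]) :=
  P.base _ (sw [(0, 1), (2, 5), (3, 7), (4, 6)]) (sw [(0, 1), (2, 7), (3, 6), (4, 5)])
    (sw [(0, 3), (1, 4), (2, 7), (5, 6)])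
    (by decide) (by decide) (by decide) (by decide) (by decide) (by decide)

set_option maxRecDepth 4000 in
theorem base2413 : P ([[0, 1], [2, 3, 4, 5], [6], [7, 8, 9]] : List (List (Fin 10)))
    (sw [(0, 3), (1, 4), (2, 5), (6, 7), (8, 9)]) :=
  P.base _ (sw [(0, 1), (2, 5), (3, 6), (4, 7), (8, 9)])
    (sw [(0, 1), (2, 7), (3, 6), (4, 9), (5, 8)]) (sw [(0, 2), (1, 3), (4, 8), (5, 7), (6, 9)])
    (by decide) (by decide) (by decide) (by decide) (by decide) (by decide)

theorem J11 : J ([] : List (List X)) 1 1 := by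
  intro a l b m hl hm hd
  obtain rfl : l = [] := by simpa using hl
  obtain rfl : m = [] := by simpa using hm
  exact ⟨_, base11.via (emb [a, b] (by simpa using hd)),
    (viaEmbedding_apply _ (emb [a, b] (by simpa using hd)) (0 : Fin 2)).trans rfl⟩

theorem K15 : K ([] : List (List X)) 1 5 := by
  intro a l x b c y m hl hm hd
  obtain rfl : l = [] := by simpa using hl
  obtain ⟨d, rfl⟩ : ∃ d, m = [d] := by simpa [List.length_eq_one_iff] using hm
  have hd' : [a, x, b, c, y, d].Nodup := by simpa using hd
  exact ⟨_, base15.via (emb _ hd'), (viaEmbedding_apply _ (emb _ hd') (0 : Fin 6)).trans rfl,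
    (viaEmbedding_apply _ (emb _ hd') (1 : Fin 6)).trans rfl⟩

theorem J24 : J ([] : List (List X)) 2 4 := by
  intro a l b m hl hm hd
  obtain ⟨a', rfl⟩ : ∃ d, l = [d] := by simpa [List.length_eq_one_iff] using hl
  obtain ⟨c, d, e, rfl⟩ : ∃ c d e, m = [c, d, e] := by simpa [List.length_eq_three] using hm
  have hd' : [a, a', e, b, c, d].Nodup := by simp at hd ⊢; grind
  exact ⟨_, base24.via (emb _ hd'), (viaEmbedding_apply _ (emb _ hd') (0 : Fin 6)).trans rfl⟩

theorem G1113 {x y z a b c : X} (hd : [[x], [y], [z], [a, b, c]].flatten.Nodup) :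
    ∃ π, P [[x], [y], [z], [a, b, c]] π :=
  ⟨_, base1113.via (emb _ hd)⟩

theorem J2213 (u v w t : X) : J [[u], [v, w, t]] 2 2 := by
  intro a l b m hl hm hd
  obtain ⟨a', rfl⟩ : ∃ d, l = [d] := by simpa [List.length_eq_one_iff] using hl
  obtain ⟨b', rfl⟩ : ∃ d, m = [d] := by simpa [List.length_eq_one_iff] using hm
  exact ⟨_, base2213.via (emb _ hd), (viaEmbedding_apply _ (emb _ hd) (0 : Fin 8)).trans rfl⟩

theorem K2413 (u v w t : X) : K [[u], [v, w, t]] 2 4 := by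
  intro a l x b c y m hl hm hd
  obtain ⟨a', rfl⟩ : ∃ d, l = [d] := by simpa [List.length_eq_one_iff] using hl
  obtain rfl : m = [] := by simpa using hm
  exact ⟨_, base2413.via (emb _ hd), (viaEmbedding_apply _ (emb _ hd) (0 : Fin 10)).trans rfl,
    (viaEmbedding_apply _ (emb _ hd) (2 : Fin 10)).trans rfl⟩


/-- some choice of the first involution works -/
def G (L : List (List X)) : Prop := ∃ π, P L π

/-- the exceptional pair of lengths -/
def exc (l m : List X) : Prop :=
  (l.length = 1 ∧ m.length = 3) ∨ (l.length = 3 ∧ m.length = 1)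

theorem J.toG {R : List (List X)} {i j : ℕ} (h : J R i j) {l m : List X} (hl : l.length = i)
    (hm : m.length = j) (hi : 1 ≤ i) (hj : 1 ≤ j) (nd : (l :: m :: R).flatten.Nodup) :
    G (l :: m :: R) := by
  cases l with
  | nil => simp at hl; omega
  | cons a l =>
    cases m with
    | nil => simp at hm; omega
    | cons b m =>
      obtain ⟨π, hπ, -⟩ := h a l b m hl hm nd
      exact ⟨π, hπ⟩

theorem G.perm {L M : List (List X)} (h : G L) (d : M.flatten.Nodup) (e : L.Perm M) : G M :=
  P.perm h (e.flatten.nodup_iff.2 d) e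

theorem nodup_perm {L M : List (List X)} (d : M.flatten.Nodup) (e : L.Perm M) :
    L.flatten.Nodup := e.flatten.nodup_iff.2 d

theorem pair_good_le {l m : List X} (hl : 1 ≤ l.length) (hlm : l.length ≤ m.length)
    (par : l.length % 2 = m.length % 2) (h : ¬ exc l m) (nd : [l, m].flatten.Nodup) :
    G [l, m] := by
  unfold exc at h
  obtain ⟨t, ht⟩ : ∃ t, m.length = l.length + 2 * t := ⟨(m.length - l.length) / 2, by omega⟩
  rcases t with _ | _ | t
  · exact (J11.steps le_rfl le_rfl (l.length - 1)).toG (by omega) (by omega) (by omega)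
      (by omega) nd
  · exact (J24.steps (by omega) (by omega) (l.length - 2)).toG (by omega) (by omega) (by omega)
      (by omega) nd
  · exact (((K15.steps (by omega) t).toJ (by omega)).steps (by omega) (by omega)
      (l.length - 1)).toG (by omega) (by omega) (by omega) (by omega) nd

theorem pair_good {l m : List X} (hl : 1 ≤ l.length) (hm : 1 ≤ m.length)
    (par : l.length % 2 = m.length % 2) (h : ¬ exc l m) (nd : [l, m].flatten.Nodup) :
    G [l, m] := by
  rcases le_total l.length m.length with hlm | hlm
  · exact pair_good_le hl hlm par h nd
  · have e : [m, l].Perm [l, m] := List.Perm.swap _ _ _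
    refine (pair_good_le hm hlm par.symm ?_ (nodup_perm nd e)).perm nd e
    unfold exc at h ⊢
    omega

theorem quad_le {l m u v : List X} (hu : u.length = 1) (hv : v.length = 3) (hl : 2 ≤ l.length)
    (hlm : l.length ≤ m.length) (par : l.length % 2 = m.length % 2)
    (nd : [l, m, u, v].flatten.Nodup) : G [l, m, u, v] := by
  obtain ⟨u, rfl⟩ := List.length_eq_one_iff.1 hu
  obtain ⟨v, w, t, rfl⟩ := List.length_eq_three.1 hv
  obtain ⟨t', ht⟩ : ∃ t, m.length = l.length + 2 * t := ⟨(m.length - l.length) / 2, by omega⟩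
  rcases t' with _ | t'
  · exact ((J2213 u v w t).steps (by omega) (by omega) (l.length - 2)).toG (by omega) (by omega)
      (by omega) (by omega) nd
  · exact ((((K2413 u v w t).steps (by omega) t').toJ (by omega)).steps (by omega) (by omega)
      (l.length - 2)).toG (by omega) (by omega) (by omega) (by omega) nd

theorem perm4 {A : Type*} (a b c d : A) : [b, a, c, d].Perm [a, b, c, d] := List.Perm.swap _ _ _

theorem quad' {l m u v : List X} (h : exc u v) (hl : 2 ≤ l.length) (hm : 2 ≤ m.length)
    (par : l.length % 2 = m.length % 2)
    (nd : [u, v, l, m].flatten.Nodup) : G [u, v, l, m] := by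
  rcases h with ⟨hu, hv⟩ | ⟨hu, hv⟩ <;> rcases le_total l.length m.length with hlm | hlm
  · have e : [l, m, u, v].Perm [u, v, l, m] := by
      rw [List.perm_iff_count]; intro z; simp only [List.count_cons]; ring
    exact (quad_le hu hv hl hlm par (nodup_perm nd e)).perm nd e
  · have e : [m, l, u, v].Perm [u, v, l, m] := by
      rw [List.perm_iff_count]; intro z; simp only [List.count_cons]; ring
    exact (quad_le hu hv hm hlm par.symm (nodup_perm nd e)).perm nd e
  · have e : [l, m, v, u].Perm [u, v, l, m] := by
      rw [List.perm_iff_count]; intro z; simp only [List.count_cons]; ring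
    exact (quad_le hv hu hl hlm par (nodup_perm nd e)).perm nd e
  · have e : [m, l, v, u].Perm [u, v, l, m] := by
      rw [List.perm_iff_count]; intro z; simp only [List.count_cons]; ring
    exact (quad_le hv hu hm hlm par.symm (nodup_perm nd e)).perm nd e

theorem c1113 {x y z w : List X} (hx : x.length = 1) (hy : y.length = 1) (hz : z.length = 1)
    (hw : w.length = 3) (nd : [x, y, z, w].flatten.Nodup) : G [x, y, z, w] := by
  obtain ⟨x, rfl⟩ := List.length_eq_one_iff.1 hx
  obtain ⟨y, rfl⟩ := List.length_eq_one_iff.1 hy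
  obtain ⟨z, rfl⟩ := List.length_eq_one_iff.1 hz
  obtain ⟨v, w, t, rfl⟩ := List.length_eq_three.1 hw
  exact G1113 nd

theorem nodup_left {L M : List (List X)} (d : (L ++ M).flatten.Nodup) : L.flatten.Nodup := by
  rw [List.flatten_append] at d
  exact d.sublist (List.sublist_append_left _ _)

theorem nodup_right {L M : List (List X)} (d : (L ++ M).flatten.Nodup) : M.flatten.Nodup := by
  rw [List.flatten_append] at d
  exact d.sublist (List.sublist_append_right _ _)

theorem two_pairs {x y z w : List X} (hx : x.length % 2 = 1) (hy : y.length % 2 = 1)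
    (hz : z.length % 2 = 1) (hw : w.length % 2 = 1) (h1 : ¬ exc x y) (h2 : ¬ exc z w)
    (nd : [x, y, z, w].flatten.Nodup) : G [x, y, z, w] :=
  P.append (L := [x, y]) (M := [z, w])
    (pair_good (by omega) (by omega) (by omega) h1 (nodup_left (M := [z, w]) nd))
    (pair_good (by omega) (by omega) (by omega) h2 (nodup_right (L := [x, y]) nd)) nd

theorem one_three {x y z w : List X} (hx : x.length = y.length) (hy : y.length = z.length)
    (h : exc z w) (nd : [x, y, z, w].flatten.Nodup) : G [x, y, z, w] := by
  rcases h with ⟨h1, h2⟩ | ⟨h1, h2⟩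
  · exact c1113 (by omega) (by omega) h1 h2 nd
  · have e : [x, y, w, z].Perm [x, y, z, w] := by
      rw [List.perm_iff_count]; intro z; simp only [List.count_cons]; ring
    exact (quad_le h2 h1 (by omega) (by omega) (by omega) (nodup_perm nd e)).perm nd e

set_option maxHeartbeats 1000000 in
theorem four_odd {x y z w : List X} (hx : x.length % 2 = 1) (hy : y.length % 2 = 1)
    (hz : z.length % 2 = 1) (hw : w.length % 2 = 1)
    (nd : [x, y, z, w].flatten.Nodup) : G [x, y, z, w] := by
  have e1 : [x, z, y, w].Perm [x, y, z, w] := by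
    rw [List.perm_iff_count]; intro z; simp only [List.count_cons]; ring
  have e2 : [x, w, y, z].Perm [x, y, z, w] := by
    rw [List.perm_iff_count]; intro z; simp only [List.count_cons]; ring
  by_cases p1 : ¬ exc x y ∧ ¬ exc z w
  · exact two_pairs hx hy hz hw p1.1 p1.2 nd
  by_cases p2 : ¬ exc x z ∧ ¬ exc y w
  · exact (two_pairs hx hz hy hw p2.1 p2.2 (nodup_perm nd e1)).perm nd e1
  by_cases p3 : ¬ exc x w ∧ ¬ exc y z
  · exact (two_pairs hx hw hy hz p3.1 p3.2 (nodup_perm nd e2)).perm nd e2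
  have key : (x.length = y.length ∧ y.length = z.length ∧ exc z w) ∨
      (x.length = y.length ∧ y.length = w.length ∧ exc w z) ∨
      (x.length = z.length ∧ z.length = w.length ∧ exc w y) ∨
      (y.length = z.length ∧ z.length = w.length ∧ exc w x) := by
    have q1 : exc x y ∨ exc z w := or_iff_not_and_not.2 p1
    have q2 : exc x z ∨ exc y w := or_iff_not_and_not.2 p2
    have q3 : exc x w ∨ exc y z := or_iff_not_and_not.2 p3
    clear p1 p2 p3 e1 e2 nd hx hy hz hw
    unfold exc at *
    generalize x.length = a at *
    generalize y.length = b at *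
    generalize z.length = c at *
    generalize w.length = d at *
    rcases q1 with (⟨h1, h2⟩ | ⟨h1, h2⟩) | (⟨h1, h2⟩ | ⟨h1, h2⟩) <;>
    rcases q2 with (⟨h3, h4⟩ | ⟨h3, h4⟩) | (⟨h3, h4⟩ | ⟨h3, h4⟩) <;>
    rcases q3 with (⟨h5, h6⟩ | ⟨h5, h6⟩) | (⟨h5, h6⟩ | ⟨h5, h6⟩) <;>
    first
      | (exfalso; omega)
      | exact Or.inl (by omega)
      | exact Or.inr (Or.inl (by omega))
      | exact Or.inr (Or.inr (Or.inl (by omega)))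
      | exact Or.inr (Or.inr (Or.inr (by omega)))
  rcases key with ⟨k1, k2, k3⟩ | ⟨k1, k2, k3⟩ | ⟨k1, k2, k3⟩ | ⟨k1, k2, k3⟩
  · exact one_three k1 k2 k3 nd
  · have e : [x, y, w, z].Perm [x, y, z, w] := by
      rw [List.perm_iff_count]; intro z; simp only [List.count_cons]; ring
    exact (one_three k1 k2 k3 (nodup_perm nd e)).perm nd e
  · have e : [x, z, w, y].Perm [x, y, z, w] := by
      rw [List.perm_iff_count]; intro z; simp only [List.count_cons]; ring
    exact (one_three k1 k2 k3 (nodup_perm nd e)).perm nd e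
  · have e : [y, z, w, x].Perm [x, y, z, w] := by
      rw [List.perm_iff_count]; intro z; simp only [List.count_cons]; ring
    exact (one_three k1 k2 k3 (nodup_perm nd e)).perm nd e

theorem G_nil : G ([] : List (List X)) := by
  have h : IsInv {x : X | x ∈ ([] : List (List X)).flatten} 1 := ⟨by simp, by simp⟩
  exact ⟨1, 1, 1, 1, h, h, h, h, by simp [pr]⟩

theorem evens : ∀ (k : ℕ) (L : List (List X)), L.length = 2 * k →
    (∀ l ∈ L, 2 ≤ l.length ∧ l.length % 2 = 0) → L.flatten.Nodup → G L := by
  intro k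
  induction k with
  | zero =>
    intro L hL _ _
    obtain rfl : L = [] := by simpa using hL
    exact G_nil
  | succ k ih =>
    intro L hL he nd
    rcases L with _ | ⟨x, _ | ⟨y, L⟩⟩
    · simp at hL
    · simp at hL; omega
    · have hx := he x (by simp)
      have hy := he y (by simp)
      refine P.append (L := [x, y]) (M := L) ?_ ?_ nd
      · refine pair_good (by omega) (by omega) (by omega) ?_ (nodup_left (M := L) nd)
        unfold exc
        omega
      · exact ih L (by simp at hL; omega) (fun l hl => he l (by simp [hl]))
          (nodup_right (L := [x, y]) nd)

theorem odds : ∀ (k : ℕ) (L : List (List X)), L.length = 2 * k →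
    (∀ l ∈ L, l.length % 2 = 1) → L.flatten.Nodup → G L ∨ ∃ x y, L = [x, y] ∧ exc x y := by
  intro k
  induction k with
  | zero =>
    intro L hL _ _
    obtain rfl : L = [] := by simpa using hL
    exact Or.inl G_nil
  | succ k ih =>
    intro L hL ho nd
    rcases L with _ | ⟨x, _ | ⟨y, _ | ⟨z, _ | ⟨w, L⟩⟩⟩⟩
    · simp at hL
    · simp at hL; omega
    · by_cases h : exc x y
      · exact Or.inr ⟨x, y, rfl, h⟩
      · have hx := ho x (by simp)
        have hy := ho y (by simp)
        exact Or.inl (pair_good (by omega) (by omega) (by omega) h nd)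
    · simp at hL; omega
    · left
      have hx := ho x (by simp)
      have hy := ho y (by simp)
      have hz := ho z (by simp)
      have hw := ho w (by simp)
      by_cases hL0 : L = []
      · subst hL0
        exact four_odd hx hy hz hw nd
      have hlen : 0 < L.length := List.length_pos_iff.2 hL0
      have main : ∀ a b c : List X, a.length % 2 = 1 → b.length % 2 = 1 → c.length % 2 = 1 →
          ¬ exc a b → (a :: b :: c :: w :: L).Perm (x :: y :: z :: w :: L) →
          G (x :: y :: z :: w :: L) := by
        intro a b c ha hb hc hab e
        have nd' := nodup_perm nd e
        refine G.perm (L := a :: b :: c :: w :: L) ?_ nd e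
        refine P.append (L := [a, b]) (M := c :: w :: L) ?_ ?_ nd'
        · exact pair_good (by omega) (by omega) (by omega) hab
            (nodup_left (M := c :: w :: L) nd')
        · rcases ih (c :: w :: L) (by simp at hL ⊢; omega)
            (fun l hl => ho l (e.mem_iff.1 (List.mem_cons_of_mem _ (List.mem_cons_of_mem _ hl))))
            (nodup_right (L := [a, b]) nd') with h | ⟨s, t, h, -⟩
          · exact h
          · simp at h
            exact absurd h.2.2 hL0
      by_cases h1 : exc x y
      · by_cases h2 : exc x z
        · refine main y z x hy hz hx ?_ ?_
          · unfold exc at *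
            omega
          · rw [List.perm_iff_count]; intro z; simp only [List.count_cons]; ring
        · refine main x z y hx hz hy h2 ?_
          rw [List.perm_iff_count]; intro z; simp only [List.count_cons]; ring
      · exact main x y z hx hy hz h1 (List.Perm.refl _)

theorem all_good (L : List (List X)) (hne : ∀ l ∈ L, l ≠ []) (nd : L.flatten.Nodup)
    (ho : (L.filter fun l => decide (l.length % 2 = 1)).length % 2 = 0)
    (he : (L.filter fun l => !decide (l.length % 2 = 1)).length % 2 = 0)
    (h4 : 4 < L.flatten.length) : G L := by
  have e := List.filter_append_perm (fun l : List X => decide (l.length % 2 = 1)) L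
  generalize hO : (L.filter fun l => decide (l.length % 2 = 1)) = O at *
  generalize hE : (L.filter fun l => !decide (l.length % 2 = 1)) = E at *
  have nd' := nodup_perm nd e
  have hOm : ∀ l ∈ O, l.length % 2 = 1 := by
    intro l hl
    rw [← hO] at hl
    simpa using (List.mem_filter.1 hl).2
  have hEm : ∀ l ∈ E, 2 ≤ l.length ∧ l.length % 2 = 0 := by
    intro l hl
    rw [← hE] at hl
    have h1 := hne l (List.mem_filter.1 hl).1
    have h2 : ¬ l.length % 2 = 1 := by simpa using (List.mem_filter.1 hl).2
    have h3 := List.length_pos_iff.2 h1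
    omega
  refine G.perm (L := O ++ E) ?_ nd e
  rcases odds (O.length / 2) O (by omega) hOm (nodup_left nd') with h | ⟨x, y, rfl, hxy⟩
  · exact P.append h (evens (E.length / 2) E (by omega) hEm (nodup_right nd')) nd'
  · rcases E with _ | ⟨z, _ | ⟨w, E⟩⟩
    · have := e.flatten.length_eq
      simp at this h4
      unfold exc at hxy
      omega
    · simp at he
    · have hz := hEm z (by simp)
      have hw := hEm w (by simp)
      refine P.append (L := [x, y, z, w]) (M := E) ?_ ?_ nd'
      · exact quad' hxy hz.1 hw.1 (by omega) (nodup_left (M := E) nd')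
      · exact evens (E.length / 2) E (by simp at he; omega)
          (fun l hl => hEm l (by simp [hl])) (nodup_right (L := [x, y, z, w]) nd')

theorem len_parity (L : List (List X)) :
    L.flatten.length % 2 = (L.filter fun l => decide (l.length % 2 = 1)).length % 2 := by
  induction L with
  | nil => simp
  | cons l L ih =>
    rw [List.flatten_cons, List.length_append, List.filter_cons]
    split_ifs with h
    · have h' : l.length % 2 = 1 := by simpa using h
      rw [List.length_cons]
      omega
    · have h' : ¬ l.length % 2 = 1 := by simpa using h
      omega

theorem sign_formPerm [Fintype X] (l : List X) (a : X) (h : (a :: l).Nodup) :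
    sign (a :: l).formPerm = (-1) ^ l.length := by
  induction l generalizing a with
  | nil => simp
  | cons b l ih =>
    have hab : a ≠ b := fun hh => h.notMem (by simp [hh])
    rw [List.formPerm_cons_cons, map_mul, ih b h.of_cons, sign_swap hab, List.length_cons, pow_succ]
    simp

theorem sign_pr [Fintype X] (L : List (List X)) (hne : ∀ l ∈ L, l ≠ []) (nd : L.flatten.Nodup) :
    sign (pr L) = (-1) ^ (L.filter fun l => !decide (l.length % 2 = 1)).length := by
  induction L with
  | nil => simp [pr]
  | cons l L ih =>
    have hl := hne l (by simp)
    rw [pr_cons, map_mul, ih (fun l hl => hne l (by simp [hl])) (nodup_right (L := [l]) nd)]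
    cases l with
    | nil => exact absurd rfl hl
    | cons a l =>
      rw [sign_formPerm l a (by simpa using nodup_left (L := [a :: l]) nd), List.filter_cons]
      split_ifs with h
      · have : Odd l.length := by
          rw [Nat.odd_iff]
          simp at h
          omega
        rw [this.neg_one_pow, List.length_cons, pow_succ, mul_comm]
      · have : Even l.length := by
          rw [Nat.even_iff]
          simp at h
          omega
        rw [this.neg_one_pow, one_mul]

theorem exists_list [Fintype X] (φ : Perm X) : ∃ L : List (List X), (∀ l ∈ L, l ≠ []) ∧
    L.flatten.Nodup ∧ (∀ x, x ∈ L.flatten ↔ φ x ≠ x) ∧ pr L = φ := by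
  have cyc : ∀ σ : Perm X, σ.IsCycle → ∃ L : List (List X), (∀ l ∈ L, l ≠ []) ∧
      L.flatten.Nodup ∧ (∀ x, x ∈ L.flatten ↔ σ x ≠ x) ∧ pr L = σ := by
    intro σ hσ
    obtain ⟨x, hx, hs⟩ := id hσ
    refine ⟨[σ.toList x], ?_, ?_, ?_, ?_⟩
    · intro l hl
      rw [List.mem_singleton.1 hl, ne_eq, toList_eq_nil_iff]
      simpa using hx
    · simpa using nodup_toList σ x
    · intro y
      simp only [List.flatten_cons, List.flatten_nil, List.append_nil, mem_toList_iff]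
      constructor
      · rintro ⟨h, -⟩
        exact fun hy => hx ((h.apply_eq_self_iff).2 hy)
      · exact fun hy => ⟨hs hy, by simpa using hx⟩
    · simp [pr, formPerm_toList, hσ.cycleOf_eq hx]
  induction φ using cycle_induction_on with
  | base_one => exact ⟨[], by simp, by simp, by simp, by simp [pr]⟩
  | base_cycles σ hσ => exact cyc σ hσ
  | induction_disjoint σ τ hd hσ ih1 ih2 =>
    obtain ⟨L, a1, a2, a3, a4⟩ := ih1
    obtain ⟨M, b1, b2, b3, b4⟩ := ih2
    refine ⟨L ++ M, ?_, ?_, ?_, ?_⟩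
    · intro l hl
      rcases List.mem_append.1 hl with h | h
      · exact a1 l h
      · exact b1 l h
    · rw [List.flatten_append, List.nodup_append]
      refine ⟨a2, b2, ?_⟩
      rintro x hx y hy rfl
      rcases hd x with h | h
      · exact (a3 x).1 hx h
      · exact (b3 x).1 hy h
    · intro x
      rw [List.flatten_append, List.mem_append, a3, b3, ne_eq, ne_eq, ne_eq, hd.mul_apply_eq_iff]
      tauto
    · rw [pr_append, a4, b4]

theorem exists_list' [Fintype X] (φ : Perm X) : ∃ L : List (List X), (∀ l ∈ L, l ≠ []) ∧
    L.flatten.Nodup ∧ (∀ x, x ∈ L.flatten) ∧ pr L = φ := by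
  obtain ⟨L, a1, a2, a3, a4⟩ := exists_list φ
  set F : List X := (Finset.univ.filter fun x => φ x = x).toList with hF
  have hFm : ∀ x, x ∈ F ↔ φ x = x := by simp [hF]
  have hfl : (F.map fun x => [x]).flatten = F := by
    generalize F = F'
    induction F' with
    | nil => rfl
    | cons a l ih => rw [List.map_cons, List.flatten_cons, ih]; rfl
  have hpr : pr (F.map fun x => [x]) = 1 := by
    generalize F = F'
    induction F' with
    | nil => rfl
    | cons a l ih => rw [List.map_cons, pr_cons, ih]; simp
  refine ⟨L ++ F.map fun x => [x], ?_, ?_, ?_, ?_⟩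
  · intro l hl
    rcases List.mem_append.1 hl with h | h
    · exact a1 l h
    · obtain ⟨x, -, rfl⟩ := List.mem_map.1 h
      simp
  · rw [List.flatten_append, hfl, List.nodup_append]
    refine ⟨a2, Finset.nodup_toList _, ?_⟩
    rintro x hx y hy rfl
    exact (a3 x).1 hx ((hFm x).1 hy)
  · intro x
    rw [List.flatten_append, hfl, List.mem_append, a3, hFm]
    tauto
  · rw [pr_append, hpr, a4, mul_one]

end FourInv


/-- **Brenner.** Let `m = 4n` with `n ≥ 2`. Every element of `Alt(m)` is a product of
four fixed-point-free involutions (permutations of type `2^{2n}`). -/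
theorem stmt_9 (n : ℕ) (hn : 2 ≤ n)
    (φ : Equiv.Perm (Fin (4 * n))) (hφ : φ ∈ alternatingGroup (Fin (4 * n))) :
    ∃ π₁ π₂ π₃ π₄ : Equiv.Perm (Fin (4 * n)),
      (π₁ ^ 2 = 1 ∧ ∀ x, π₁ x ≠ x) ∧
      (π₂ ^ 2 = 1 ∧ ∀ x, π₂ x ≠ x) ∧
      (π₃ ^ 2 = 1 ∧ ∀ x, π₃ x ≠ x) ∧
      (π₄ ^ 2 = 1 ∧ ∀ x, π₄ x ≠ x) ∧
      φ = π₁ * π₂ * π₃ * π₄ := by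
  obtain ⟨L, a1, a2, a3, a4⟩ := FourInv.exists_list' φ
  have hlen : L.flatten.length = 4 * n := by
    have h1 := List.toFinset_card_of_nodup a2
    have h2 : L.flatten.toFinset = Finset.univ := by
      ext x
      simpa using a3 x
    rw [← h1, h2]
    simp
  have hs := FourInv.sign_pr L a1 a2
  rw [a4, Equiv.Perm.mem_alternatingGroup.1 hφ] at hs
  have he : (L.filter fun l => !decide (l.length % 2 = 1)).length % 2 = 0 := by
    rcases Nat.even_or_odd (L.filter fun l : List (Fin (4 * n)) => !decide (l.length % 2 = 1)).length with h | h
    · exact Nat.even_iff.1 h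
    · rw [h.neg_one_pow] at hs
      exact absurd hs (by decide)
  have ho := FourInv.len_parity L
  obtain ⟨π₁, π₂, π₃, π₄, h1, h2, h3, h4, h⟩ :=
    FourInv.all_good L a1 a2 (by omega) he (by omega)
  rw [a4] at h
  exact ⟨π₁, π₂, π₃, π₄, ⟨by rw [pow_two, h1.1], fun x => (h1.2 x).2 (a3 x)⟩,
    ⟨by rw [pow_two, h2.1], fun x => (h2.2 x).2 (a3 x)⟩,
    ⟨by rw [pow_two, h3.1], fun x => (h3.2 x).2 (a3 x)⟩,
    ⟨by rw [pow_two, h4.1], fun x => (h4.2 x).2 (a3 x)⟩, h⟩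
end
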